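/- arXiv:1312.2809 — 3 statements merged into one kernel-verified Lean document; each statement's English description precedes it below -/
import Mathlib

section
/- For every t ∈ (1,2), the function f_t(x) = 1/((x+1)√((x+1)^t − x^t)) is completely monotone on (0,∞). -/
/-- `f` is completely monotone on `s`: the `n`-th derivative has sign `(-1)^n` on `s`. -/
def CompletelyMonotoneOn (f : ℝ → ℝ) (s : Set ℝ) : Prop :=
  ∀ n : ℕ, ∀ x ∈ s, 0 ≤ (-1 : ℝ) ^ n * iteratedDeriv n f x

/-! Write `φ x = (x + 1) ^ t - x ^ t`, so that the function is `(x + 1)⁻¹ * φ x ^ (-1/2)`.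
Completely monotone functions of Bernstein functions are completely monotone, by induction on the
order: `-(f ∘ φ)' = (-f' ∘ φ) * φ'` is a product to which Leibniz' rule applies. That `φ` is
Bernstein is seen from its derivative, `t` times the increment over `[x, x + 1]` of the Bernstein
function `x ↦ x ^ (t - 1)`. Such increments are completely monotone, since `(-1) ^ n` times the
`n`-th derivative of a Bernstein function is nondecreasing. -/

open Set
open scoped ContDiff

/-- The classical notion of a completely monotone function on an open set `s`, closed under products
and under composition with Bernstein functions. The sign conditions in `CompletelyMonotoneOn` do not
force the derivatives to exist (a missing one has the value `0`), so smoothness is added here. -/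
structure SmoothCompletelyMonotoneOn (f : ℝ → ℝ) (s : Set ℝ) : Prop where
  contDiffOn : ContDiffOn ℝ ∞ f s
  completelyMonotoneOn : CompletelyMonotoneOn f s

/-- Bernstein functions on an open set `s`: positive functions with completely monotone derivative.
Positivity is strict, to allow composition with completely monotone functions on `(0, ∞)`. -/
structure IsBernsteinOn (φ : ℝ → ℝ) (s : Set ℝ) : Prop where
  differentiableOn : DifferentiableOn ℝ φ s
  pos : ∀ x ∈ s, 0 < φ x
  completelyMonotone_deriv : SmoothCompletelyMonotoneOn (deriv φ) s

theorem neg_one_pow_mul_iteratedDeriv_mul_nonneg {f g : ℝ → ℝ} {x : ℝ} {n : ℕ}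
    (hf : ContDiffAt ℝ n f x) (hg : ContDiffAt ℝ n g x)
    (hf_sign : ∀ i ≤ n, 0 ≤ (-1 : ℝ) ^ i * iteratedDeriv i f x)
    (hg_sign : ∀ i ≤ n, 0 ≤ (-1 : ℝ) ^ i * iteratedDeriv i g x) :
    0 ≤ (-1 : ℝ) ^ n * iteratedDeriv n (f * g) x := by
  rw [iteratedDeriv_mul hf hg, Finset.mul_sum]
  refine Finset.sum_nonneg fun i hi => ?_
  have hin : i ≤ n := Finset.mem_range_succ_iff.1 hi
  calc 0 ≤ (n.choose i : ℝ) * (((-1) ^ i * iteratedDeriv i f x) *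
          ((-1) ^ (n - i) * iteratedDeriv (n - i) g x)) :=
        mul_nonneg (Nat.cast_nonneg _) (mul_nonneg (hf_sign i hin) (hg_sign _ (n.sub_le i)))
    _ = (-1) ^ n * (n.choose i * iteratedDeriv i f x * iteratedDeriv (n - i) g x) := by
        rw [← pow_mul_pow_sub (-1 : ℝ) hin]
        ring

namespace SmoothCompletelyMonotoneOn

variable {f g : ℝ → ℝ} {s : Set ℝ}

theorem contDiffAt (hf : SmoothCompletelyMonotoneOn f s) (hs : IsOpen s) {x : ℝ} (hx : x ∈ s)
    (n : ℕ) : ContDiffAt ℝ n f x :=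
  (hf.contDiffOn.contDiffAt (hs.mem_nhds hx)).of_le (mod_cast le_top)

theorem nonneg (hf : SmoothCompletelyMonotoneOn f s) {x : ℝ} (hx : x ∈ s) : 0 ≤ f x := by
  simpa using hf.completelyMonotoneOn 0 x hx

theorem congr (hf : SmoothCompletelyMonotoneOn f s) (hs : IsOpen s) (hgf : EqOn g f s) :
    SmoothCompletelyMonotoneOn g s where
  contDiffOn := hf.contDiffOn.congr hgf
  completelyMonotoneOn n x hx := by
    rw [hgf.iteratedDeriv_of_isOpen hs n hx]
    exact hf.completelyMonotoneOn n x hx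

theorem const_mul (hf : SmoothCompletelyMonotoneOn f s) {c : ℝ} (hc : 0 ≤ c) :
    SmoothCompletelyMonotoneOn (fun x => c * f x) s where
  contDiffOn := contDiffOn_const.mul hf.contDiffOn
  completelyMonotoneOn n x hx := by
    rw [iteratedDeriv_const_mul_field, mul_left_comm]
    exact mul_nonneg hc (hf.completelyMonotoneOn n x hx)

theorem mul (hf : SmoothCompletelyMonotoneOn f s) (hg : SmoothCompletelyMonotoneOn g s)
    (hs : IsOpen s) : SmoothCompletelyMonotoneOn (f * g) s where
  contDiffOn := hf.contDiffOn.mul hg.contDiffOn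
  completelyMonotoneOn n x hx :=
    neg_one_pow_mul_iteratedDeriv_mul_nonneg (hf.contDiffAt hs hx n) (hg.contDiffAt hs hx n)
      (fun i _ => hf.completelyMonotoneOn i x hx) (fun i _ => hg.completelyMonotoneOn i x hx)

theorem neg_deriv (hf : SmoothCompletelyMonotoneOn f s) (hs : IsOpen s) :
    SmoothCompletelyMonotoneOn (-deriv f) s where
  contDiffOn := (hf.contDiffOn.deriv_of_isOpen hs le_rfl).neg
  completelyMonotoneOn n x hx := by
    rw [iteratedDeriv_neg, mul_neg, ← neg_mul, ← mul_neg_one, ← pow_succ, ← iteratedDeriv_succ']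
    exact hf.completelyMonotoneOn (n + 1) x hx

theorem comp_add_const {t : Set ℝ} {c : ℝ} (hf : SmoothCompletelyMonotoneOn f t)
    (hst : MapsTo (· + c) s t) : SmoothCompletelyMonotoneOn (fun x => f (x + c)) s where
  contDiffOn := hf.contDiffOn.comp (contDiff_id.add contDiff_const).contDiffOn hst
  completelyMonotoneOn n x hx := by
    rw [iteratedDeriv_comp_add_const]
    exact hf.completelyMonotoneOn n _ (hst hx)

end SmoothCompletelyMonotoneOn

namespace IsBernsteinOn

variable {f φ : ℝ → ℝ} {s : Set ℝ}

theorem of_hasDerivAt {φ' : ℝ → ℝ} (hs : IsOpen s) (hpos : ∀ x ∈ s, 0 < φ x)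
    (hderiv : ∀ x ∈ s, HasDerivAt φ (φ' x) x) (hφ' : SmoothCompletelyMonotoneOn φ' s) :
    IsBernsteinOn φ s where
  differentiableOn x hx := (hderiv x hx).differentiableAt.differentiableWithinAt
  pos := hpos
  completelyMonotone_deriv := hφ'.congr hs fun x hx => (hderiv x hx).deriv

theorem contDiffOn (hφ : IsBernsteinOn φ s) (hs : IsOpen s) : ContDiffOn ℝ ∞ φ s :=
  (contDiffOn_infty_iff_deriv_of_isOpen hs).2
    ⟨hφ.differentiableOn, hφ.completelyMonotone_deriv.contDiffOn⟩

theorem eqOn_deriv_comp (hφ : IsBernsteinOn φ s) (hs : IsOpen s)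
    (hf : DifferentiableOn ℝ f (Ioi 0)) :
    EqOn (deriv (f ∘ φ)) (-((-deriv f ∘ φ) * deriv φ)) s := fun x hx => by
  have hfx : DifferentiableAt ℝ f (φ x) := hf.differentiableAt (Ioi_mem_nhds (hφ.pos x hx))
  have hφx : DifferentiableAt ℝ φ x := hφ.differentiableOn.differentiableAt (hs.mem_nhds hx)
  simp [deriv_comp x hfx hφx]

theorem completelyMonotoneOn_comp (hφ : IsBernsteinOn φ s) (hs : IsOpen s)
    (hf : SmoothCompletelyMonotoneOn f (Ioi 0)) : CompletelyMonotoneOn (f ∘ φ) s := by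
  intro n
  induction n using Nat.strong_induction_on generalizing f with
  | _ n ih =>
    intro x hx
    cases n with
    | zero => simpa using hf.nonneg (hφ.pos x hx)
    | succ n =>
      have hf' : SmoothCompletelyMonotoneOn (-deriv f) (Ioi 0) := hf.neg_deriv isOpen_Ioi
      have hcomp : ContDiffAt ℝ n (-deriv f ∘ φ) x :=
        (hf'.contDiffAt isOpen_Ioi (hφ.pos x hx) n).comp x
          (((hφ.contDiffOn hs).contDiffAt (hs.mem_nhds hx)).of_le (mod_cast le_top))
      have hprod : 0 ≤ (-1 : ℝ) ^ n * iteratedDeriv n ((-deriv f ∘ φ) * deriv φ) x :=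
        neg_one_pow_mul_iteratedDeriv_mul_nonneg hcomp
          (hφ.completelyMonotone_deriv.contDiffAt hs hx n)
          (fun i hi => ih i (Nat.lt_succ_of_le hi) hf' x hx)
          (fun i _ => hφ.completelyMonotone_deriv.completelyMonotoneOn i x hx)
      have hderiv := hφ.eqOn_deriv_comp hs (hf.contDiffOn.differentiableOn (by simp))
      rw [iteratedDeriv_succ', hderiv.iteratedDeriv_of_isOpen hs n hx, iteratedDeriv_neg, pow_succ]
      simpa using hprod

theorem smoothCompletelyMonotoneOn_comp (hφ : IsBernsteinOn φ s) (hs : IsOpen s)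
    (hf : SmoothCompletelyMonotoneOn f (Ioi 0)) : SmoothCompletelyMonotoneOn (f ∘ φ) s where
  contDiffOn := hf.contDiffOn.comp (hφ.contDiffOn hs) hφ.pos
  completelyMonotoneOn := hφ.completelyMonotoneOn_comp hs hf

theorem monotoneOn_neg_one_pow_mul_iteratedDeriv (hφ : IsBernsteinOn φ s) (hs : IsOpen s)
    (hconv : Convex ℝ s) (n : ℕ) :
    MonotoneOn (fun x => (-1) ^ n * iteratedDeriv n φ x) s := by
  have hdiff : DifferentiableOn ℝ (fun x => (-1) ^ n * iteratedDeriv n φ x) s :=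
    (((hφ.contDiffOn hs).differentiableOn_iteratedDerivWithin (mod_cast ENat.natCast_lt_top n)
      hs.uniqueDiffOn).congr (iteratedDerivWithin_of_isOpen hs).symm).const_mul _
  refine monotoneOn_of_deriv_nonneg hconv hdiff.continuousOn (hdiff.mono interior_subset)
    fun x hx => ?_
  rw [deriv_const_mul_field, ← iteratedDeriv_succ, iteratedDeriv_succ']
  exact hφ.completelyMonotone_deriv.completelyMonotoneOn n x (interior_subset hx)

theorem smoothCompletelyMonotoneOn_add_const_sub {a c : ℝ} (hφ : IsBernsteinOn φ (Ioi a))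
    (hc : 0 ≤ c) : SmoothCompletelyMonotoneOn (fun x => φ (x + c) - φ x) (Ioi a) := by
  have hshift : MapsTo (· + c) (Ioi a) (Ioi a) := fun x hx => lt_add_of_lt_of_nonneg hx hc
  have hsmooth : ContDiffOn ℝ ∞ φ (Ioi a) := hφ.contDiffOn isOpen_Ioi
  have hsmooth_shift : ContDiffOn ℝ ∞ (fun x => φ (x + c)) (Ioi a) :=
    hsmooth.comp (contDiff_id.add contDiff_const).contDiffOn hshift
  refine ⟨hsmooth_shift.sub hsmooth, fun n x hx => ?_⟩
  have hsub : iteratedDeriv n (fun x => φ (x + c) - φ x) x =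
      iteratedDeriv n φ (x + c) - iteratedDeriv n φ x := by
    have hn : (n : ℕ∞ω) ≤ ∞ := mod_cast le_top
    rw [iteratedDeriv_fun_sub
      ((hsmooth_shift.contDiffAt (Ioi_mem_nhds hx)).of_le hn)
      ((hsmooth.contDiffAt (Ioi_mem_nhds hx)).of_le hn), iteratedDeriv_comp_add_const]
  rw [hsub, mul_sub, sub_nonneg]
  exact hφ.monotoneOn_neg_one_pow_mul_iteratedDeriv isOpen_Ioi (convex_Ioi a) n hx (hshift hx)
    (le_add_of_nonneg_right hc)

end IsBernsteinOn

theorem smoothCompletelyMonotoneOn_rpow_neg {p : ℝ} (hp : 0 ≤ p) :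
    SmoothCompletelyMonotoneOn (fun x : ℝ => x ^ (-p)) (Ioi 0) where
  contDiffOn x hx := (Real.contDiffAt_rpow_const_of_ne (ne_of_gt hx)).contDiffWithinAt
  completelyMonotoneOn n x hx := by
    have hpoch : 0 ≤ (ascPochhammer ℝ n).eval p := by
      rcases hp.eq_or_lt with rfl | hp
      · rw [ascPochhammer_eval_zero]
        split_ifs <;> simp
      · exact (ascPochhammer_pos n p hp).le
    have hsign := ascPochhammer_eval_neg_eq_descPochhammer ℝ (-p) n
    rw [neg_neg] at hsign
    rw [iteratedDeriv_eq_iterate, Real.iter_deriv_rpow_const, ← mul_assoc, ← hsign]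
    exact mul_nonneg hpoch (Real.rpow_nonneg (le_of_lt hx) _)

theorem isBernsteinOn_rpow {s : ℝ} (hs : s ∈ Icc 0 1) :
    IsBernsteinOn (fun x : ℝ => x ^ s) (Ioi 0) := by
  refine .of_hasDerivAt isOpen_Ioi (fun x hx => Real.rpow_pos_of_pos hx s)
    (fun x hx => Real.hasDerivAt_rpow_const (.inl (ne_of_gt hx))) ?_
  simpa using (smoothCompletelyMonotoneOn_rpow_neg (sub_nonneg.2 hs.2)).const_mul hs.1

theorem isBernsteinOn_add_const_rpow_sub_rpow {t c : ℝ} (ht : t ∈ Icc 1 2) (hc : 0 < c) :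
    IsBernsteinOn (fun x => (x + c) ^ t - x ^ t) (Ioi 0) := by
  have ht_pos : 0 < t := zero_lt_one.trans_le ht.1
  have hincr : SmoothCompletelyMonotoneOn (fun x => (x + c) ^ (t - 1) - x ^ (t - 1)) (Ioi 0) :=
    (isBernsteinOn_rpow ⟨by linarith [ht.1], by linarith [ht.2]⟩)
      |>.smoothCompletelyMonotoneOn_add_const_sub hc.le
  refine .of_hasDerivAt isOpen_Ioi (fun x (hx : 0 < x) => ?_) (fun x (hx : 0 < x) => ?_)
    (hincr.const_mul ht_pos.le)
  · exact sub_pos.2 (Real.rpow_lt_rpow hx.le (lt_add_of_pos_right x hc) ht_pos)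
  · have hshift : HasDerivAt (fun x => (x + c) ^ t) (t * (x + c) ^ (t - 1)) x :=
      (Real.hasDerivAt_rpow_const (.inl (add_pos hx hc).ne')).comp_add_const x c
    exact (hshift.sub (Real.hasDerivAt_rpow_const (.inl hx.ne'))).congr_deriv (mul_sub ..).symm

theorem ft_completelyMonotone (t : ℝ) (ht : t ∈ Set.Ioo (1:ℝ) 2) :
    CompletelyMonotoneOn
      (fun x : ℝ => 1 / ((x + 1) * Real.sqrt ((x + 1) ^ t - x ^ t)))
      (Set.Ioi 0) := by
  have hφ : IsBernsteinOn (fun x => (x + 1) ^ t - x ^ t) (Ioi 0) :=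
    isBernsteinOn_add_const_rpow_sub_rpow (Ioo_subset_Icc_self ht) one_pos
  have hinv : SmoothCompletelyMonotoneOn (fun x => (x + 1) ^ (-1 : ℝ)) (Ioi 0) :=
    (smoothCompletelyMonotoneOn_rpow_neg zero_le_one).comp_add_const
      fun x (hx : 0 < x) => add_pos hx one_pos
  have hinv_sqrt : SmoothCompletelyMonotoneOn
      (fun x => ((x + 1) ^ t - x ^ t) ^ (-(1 / 2) : ℝ)) (Ioi 0) :=
    hφ.smoothCompletelyMonotoneOn_comp isOpen_Ioi
      (smoothCompletelyMonotoneOn_rpow_neg one_half_pos.le)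
  refine ((hinv.mul hinv_sqrt isOpen_Ioi).congr isOpen_Ioi fun x hx => ?_).completelyMonotoneOn
  simp only [Pi.mul_apply]
  rw [Real.rpow_neg (hφ.pos x hx).le, ← Real.sqrt_eq_rpow, Real.rpow_neg_one, one_div, mul_inv]
end

section
/- For t > 2, the function z ↦ (1+z)^t − 1 (principal branch) has at least two zeros in ℂ∖(−∞,0], namely (1+z)^t = 1 has solutions z = e^{±2πi/t} − 1 with nonzero imaginary part; consequently 1/((x+1)√((x+1)^t−1)) is not hyperbolically completely monotone. -/
/-- `f` is hyperbolically completely monotone: for every `u > 0`, the function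
`v ↦ f(uv) f(u/v)` is a completely monotone function of `w = v + 1/v` on `[2, ∞)`. -/
def HCM (f : ℝ → ℝ) : Prop :=
  ∀ u : ℝ, 0 < u → ∃ H : ℝ → ℝ, CompletelyMonotoneOn H (Set.Ici 2) ∧
    ∀ v : ℝ, 0 < v → f (u * v) * f (u / v) = H (v + 1 / v)

/-!
If `f` is HCM and `g` is holomorphic on the slit plane with `f ^ 2 * g = 1` on the positive axis,
then `g` has no zeros in the slit plane; for `g z = (1 + z) ^ 2 * ((1 + z) ^ t - 1)` the point
`exp (2 * π * I / t) - 1` is a zero.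

To see that `g` is zero-free, fix `u > 0`. The product `g (u * v) * g (u / v)` is invariant under
`v ↦ v⁻¹`, so it is `D (v + v⁻¹)` for a function `D` holomorphic off `(-∞, -2]`. A real point of
`(-2, ∞)` comes from a positive `v` or from `‖v‖ = 1`, so `D` does not vanish there as long as `g`
has no zero of modulus `u`. On `(2, ∞)` the function `1 / D` is the square of a completely monotone
function, so its Taylor coefficients at a large real point alternate in sign, and (as in
Pringsheim's theorem) the first obstruction to its analytic continuation, the nearest zero of `D`,
would be matched by one on the real axis. Hence `D` has no zeros in the half plane `-2 < re w`.
Given `z` in the slit plane, `u` can be taken close to `‖z‖` so that no zero of `g` has modulus `u`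
while `z / u + u / z` stays in that half plane.
-/

open Complex Filter Metric Set Topology
open scoped ComplexConjugate ComplexOrder

section AddInv

variable {K : Type*} [Field K]

theorem eq_or_eq_inv_of_add_inv_eq_add_inv {v w : K} (hv : v ≠ 0) (hw : w ≠ 0)
    (h : v + v⁻¹ = w + w⁻¹) : v = w ∨ v = w⁻¹ := by
  have hfactor : (v - w) * (v * w - 1) = 0 := by
    field_simp at h
    linear_combination h
  rcases mul_eq_zero.1 hfactor with h | h
  · exact Or.inl (sub_eq_zero.1 h)
  · exact Or.inr (eq_inv_of_mul_eq_one_left (sub_eq_zero.1 h))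

theorem half_add_mul_half_sub [NeZero (2 : K)] {w s : K} (hs : s ^ 2 = w ^ 2 - 4) :
    (w + s) / 2 * ((w - s) / 2) = 1 := by
  have h2 : (2 : K) ≠ 0 := NeZero.ne 2
  field_simp
  linear_combination -hs

theorem half_add_ne_zero [NeZero (2 : K)] {w s : K} (hs : s ^ 2 = w ^ 2 - 4) :
    (w + s) / 2 ≠ 0 :=
  left_ne_zero_of_mul_eq_one (half_add_mul_half_sub hs)

theorem half_add_add_inv [NeZero (2 : K)] {w s : K} (hs : s ^ 2 = w ^ 2 - 4) :
    (w + s) / 2 + ((w + s) / 2)⁻¹ = w := by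
  rw [← eq_inv_of_mul_eq_one_right (half_add_mul_half_sub hs), ← add_div, add_add_sub_cancel,
    add_self_div_two]

end AddInv

theorem exists_pos_add_inv_eq {x : ℝ} (hx : 2 ≤ x) : ∃ v : ℝ, 0 < v ∧ v + v⁻¹ = x :=
  ⟨(x + √(x ^ 2 - 4)) / 2, by positivity, half_add_add_inv (Real.sq_sqrt (by nlinarith))⟩

section SlitPlane

theorem isConnected_slitPlane : IsConnected slitPlane :=
  (starConvex_one_slitPlane.isPathConnected one_mem_slitPlane).isConnected

theorem inv_mem_slitPlane {v : ℂ} (hv : v ∈ slitPlane) : v⁻¹ ∈ slitPlane := by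
  rw [mem_slitPlane_iff_arg] at hv ⊢
  refine ⟨?_, inv_ne_zero hv.2⟩
  rw [arg_inv, if_neg hv.1]
  linarith [neg_pi_lt_arg v]

theorem ofReal_mul_mem_slitPlane {u : ℝ} (hu : 0 < u) {v : ℂ} (hv : v ∈ slitPlane) :
    u * v ∈ slitPlane := by
  rw [mem_slitPlane_iff_arg] at hv ⊢
  rw [arg_real_mul v hu]
  exact ⟨hv.1, mul_ne_zero (ofReal_ne_zero.2 hu.ne') hv.2⟩

theorem mem_slitPlane_of_add_inv_add_two_mem {v : ℂ} (hv : v ≠ 0)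
    (h : v + v⁻¹ + 2 ∈ slitPlane) : v ∈ slitPlane := by
  contrapose! h
  obtain ⟨x, rfl⟩ : ∃ x : ℝ, (x : ℂ) = v :=
    ⟨v.re, Complex.ext rfl (by simpa [eq_comm] using (not_or.1 (mem_slitPlane_iff.not.1 h)).2)⟩
  have hx : x < 0 := (not_lt.1 (ofReal_mem_slitPlane.not.1 h)).lt_of_ne (ofReal_ne_zero.1 hv)
  have hsq : x + x⁻¹ + 2 = (x + 1) ^ 2 / x := by
    field_simp [hx.ne]
    ring
  rw [← ofReal_inv, ← ofReal_add, ← ofReal_ofNat, ← ofReal_add, ofReal_mem_slitPlane, hsq, not_lt]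
  exact div_nonpos_of_nonneg_of_nonpos (sq_nonneg _) hx.le

theorem im_eq_zero_or_norm_eq_one_of_add_inv {v : ℂ} {x : ℝ} (hv : v ≠ 0) (h : v + v⁻¹ = x) :
    v.im = 0 ∨ ‖v‖ = 1 := by
  have hconj : conj v = v ∨ conj v = v⁻¹ :=
    eq_or_eq_inv_of_add_inv_eq_add_inv ((map_ne_zero conj).2 hv) hv (by
      rw [← map_inv₀, ← map_add, h, conj_ofReal])
  refine hconj.imp conj_eq_iff_im.1 fun h => ?_
  have hsq : (‖v‖ : ℂ) ^ 2 = 1 := by rw [← mul_conj', h, mul_inv_cancel₀ hv]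
  exact (pow_eq_one_iff_of_nonneg (norm_nonneg v) two_ne_zero).1 (mod_cast hsq)

theorem neg_two_lt_re_add_inv {v : ℂ} (hv : v ∈ slitPlane) (hnorm : ‖v‖ = 1) :
    -2 < (v + v⁻¹).re := by
  have hre : -1 < v.re := by
    have hsq : v.re * v.re + v.im * v.im = 1 := by
      rw [← normSq_apply, normSq_eq_norm_sq, hnorm, one_pow]
    rcases mem_slitPlane_iff.1 hv with h | h
    · linarith
    · nlinarith [mul_self_pos.2 h]
  rw [inv_eq_conj hnorm, add_re, conj_re]
  linarith

end SlitPlane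

section Joukowski

/-- A right inverse of the Joukowski map `v ↦ v + v⁻¹`; it need not be continuous. -/
noncomputable def joukowskiInv (w : ℂ) : ℂ :=
  (w + Complex.sqrt (w ^ 2 - 4)) / 2

theorem complex_sqrt_sq (z : ℂ) : Complex.sqrt z ^ 2 = z := by
  simp [Complex.sqrt]

theorem joukowskiInv_ne_zero (w : ℂ) : joukowskiInv w ≠ 0 :=
  half_add_ne_zero (complex_sqrt_sq _)

theorem joukowskiInv_add_inv (w : ℂ) : joukowskiInv w + (joukowskiInv w)⁻¹ = w :=
  half_add_add_inv (complex_sqrt_sq _)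

theorem apply_joukowskiInv_add_inv {α : Type*} {Q : ℂ → α} (hQ : ∀ v, Q v⁻¹ = Q v) {v : ℂ}
    (hv : v ≠ 0) : Q (joukowskiInv (v + v⁻¹)) = Q v := by
  rcases eq_or_eq_inv_of_add_inv_eq_add_inv (joukowskiInv_ne_zero _) hv
    (joukowskiInv_add_inv _) with h | h
  · rw [h]
  · rw [h, hQ]

theorem joukowskiInv_mem_slitPlane {w : ℂ} (hw : w + 2 ∈ slitPlane) :
    joukowskiInv w ∈ slitPlane :=
  mem_slitPlane_of_add_inv_add_two_mem (joukowskiInv_ne_zero w) (by rwa [joukowskiInv_add_inv])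

theorem exists_sq_eq_and_differentiableAt {a : ℂ} (ha : a ≠ 0) :
    ∃ s : ℂ → ℂ, (∀ z, s z ^ 2 = z) ∧ DifferentiableAt ℂ s a := by
  rcases mem_slitPlane_or_neg_mem_slitPlane ha with h | h
  · exact ⟨Complex.sqrt, complex_sqrt_sq, differentiableAt_sqrt h⟩
  · refine ⟨fun z => I * Complex.sqrt (-z), fun z => ?_, by fun_prop (disch := exact h)⟩
    rw [mul_pow, I_sq, complex_sqrt_sq]
    ring

theorem continuousAt_joukowskiInv_two : ContinuousAt joukowskiInv 2 := by
  have hsqrt : ContinuousAt (fun w : ℂ => Complex.sqrt (w ^ 2 - 4)) 2 := by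
    refine ContinuousAt.comp (g := Complex.sqrt) ?_ (by fun_prop)
    exact continuousAt_sqrt (Or.inl (by norm_num))
  exact (continuousAt_id.add hsqrt).div_const 2

variable {E : Type*} [NormedAddCommGroup E] [NormedSpace ℂ E]

theorem differentiableAt_comp_joukowskiInv {Q : ℂ → E} (hQ : ∀ v, Q v⁻¹ = Q v)
    (hd : DifferentiableOn ℂ Q slitPlane) {w : ℂ} (hw : w + 2 ∈ slitPlane) (hw2 : w ≠ 2) :
    DifferentiableAt ℂ (Q ∘ joukowskiInv) w := by
  have hne : w ^ 2 - 4 ≠ 0 := by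
    have : (w - 2) * (w + 2) ≠ 0 := mul_ne_zero (sub_ne_zero.2 hw2) (slitPlane_ne_zero hw)
    convert this using 1
    ring
  obtain ⟨s, hs, hsd⟩ := exists_sq_eq_and_differentiableAt hne
  have hbranch : Q ∘ joukowskiInv = Q ∘ fun z => (z + s (z ^ 2 - 4)) / 2 := by
    funext z
    have h := apply_joukowskiInv_add_inv hQ (half_add_ne_zero (hs (z ^ 2 - 4)))
    rwa [half_add_add_inv (hs _)] at h
  have hmem : (w + s (w ^ 2 - 4)) / 2 ∈ slitPlane :=
    mem_slitPlane_of_add_inv_add_two_mem (half_add_ne_zero (hs _)) (by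
      rwa [half_add_add_inv (hs _)])
  rw [hbranch]
  refine (hd.differentiableAt (isOpen_slitPlane.mem_nhds hmem)).comp w ?_
  have : DifferentiableAt ℂ (fun z => s (z ^ 2 - 4)) w :=
    hsd.comp w (by fun_prop)
  fun_prop

theorem differentiableOn_comp_joukowskiInv [CompleteSpace E] {Q : ℂ → E}
    (hQ : ∀ v, Q v⁻¹ = Q v) (hd : DifferentiableOn ℂ Q slitPlane) :
    DifferentiableOn ℂ (Q ∘ joukowskiInv) {w | w + 2 ∈ slitPlane} := by
  have h2 : (2 : ℂ) + 2 ∈ slitPlane := Or.inl (by norm_num)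
  have hnhds : {w : ℂ | w + 2 ∈ slitPlane} ∈ 𝓝 (2 : ℂ) :=
    (isOpen_slitPlane.preimage (continuous_add_const 2)).mem_nhds h2
  refine (differentiableOn_compl_singleton_and_continuousAt_iff hnhds).1 ⟨?_, ?_⟩
  · exact fun w hw => (differentiableAt_comp_joukowskiInv hQ hd hw.1 hw.2).differentiableWithinAt
  · refine ContinuousAt.comp ?_ continuousAt_joukowskiInv_two
    exact (hd.differentiableAt
      (isOpen_slitPlane.mem_nhds (joukowskiInv_mem_slitPlane h2))).continuousAt

end Joukowski

section AlternatingTaylorCoefficients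

theorem sub_norm_sub_mem_ball {c w : ℂ} {r : ℝ} (hw : w ∈ ball c r) :
    c - ‖w - c‖ ∈ ball c r := by
  rw [mem_ball, dist_eq] at hw ⊢
  simpa using hw

theorem norm_le_norm_apply_sub_of_alternating {f : ℂ → ℂ} {c w : ℂ} {r : ℝ}
    (hf : DifferentiableOn ℂ f (ball c r)) (halt : ∀ n, 0 ≤ (-1) ^ n * iteratedDeriv n f c)
    (hw : w ∈ ball c r) : ‖f w‖ ≤ ‖f (c - ‖w - c‖)‖ := by
  have hw' := sub_norm_sub_mem_ball hw
  have hterm (n : ℕ) : ((n.factorial : ℂ)⁻¹ • (c - ‖w - c‖ - c) ^ n • iteratedDeriv n f c) =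
      (‖(n.factorial : ℂ)⁻¹ • (w - c) ^ n • iteratedDeriv n f c‖ : ℂ) := by
    have hnorm : (‖iteratedDeriv n f c‖ : ℂ) = (-1) ^ n * iteratedDeriv n f c := by
      rw [← norm_of_nonneg' (halt n)]
      simp
    simp only [smul_eq_mul, norm_mul, norm_inv, norm_natCast, norm_pow, ofReal_mul, ofReal_inv,
      ofReal_natCast, ofReal_pow, hnorm, sub_sub_cancel_left]
    rw [neg_pow]
    ring
  have hsum := hasSum_re (hasSum_taylorSeries_on_ball hf hw')
  refine ((hasSum_taylorSeries_on_ball hf hw).norm_le_of_bounded hsum fun n => ?_).trans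
    (re_le_norm _)
  rw [hterm, ofReal_re]

theorem norm_apply_sub_le_norm_of_alternating_inv {D : ℂ → ℂ} {c w : ℂ} {r : ℝ}
    (hD : DifferentiableOn ℂ D (ball c r)) (hD0 : ∀ z ∈ ball c r, D z ≠ 0)
    (halt : ∀ n, 0 ≤ (-1) ^ n * iteratedDeriv n D⁻¹ c) (hw : w ∈ ball c r) :
    ‖D (c - ‖w - c‖)‖ ≤ ‖D w‖ := by
  have hw' := sub_norm_sub_mem_ball hw
  have hle := norm_le_norm_apply_sub_of_alternating (hD.inv hD0) halt hw
  rwa [Pi.inv_apply, Pi.inv_apply, norm_inv, norm_inv,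
    inv_le_inv₀ (norm_pos_iff.2 (hD0 w hw)) (norm_pos_iff.2 (hD0 _ hw'))] at hle

theorem exists_nearest_zero {X Y : Type*} [PseudoMetricSpace X] [ProperSpace X]
    [TopologicalSpace Y] [T1Space Y] [Zero Y] {D : X → Y} {c w : X} {r : ℝ}
    (hD : ContinuousOn D (ball c r)) (hw : w ∈ ball c r) (hDw : D w = 0) :
    ∃ z ∈ ball c r, D z = 0 ∧ ∀ y ∈ ball c (dist z c), D y ≠ 0 := by
  have hsub : closedBall c (dist w c) ⊆ ball c r := closedBall_subset_ball hw
  have hcompact : IsCompact (closedBall c (dist w c) ∩ D ⁻¹' {0}) :=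
    (isCompact_closedBall _ _).of_isClosed_subset
      ((hD.mono hsub).preimage_isClosed_of_isClosed isClosed_closedBall isClosed_singleton)
      inter_subset_left
  obtain ⟨z, ⟨hz, hDz⟩, hmin⟩ := hcompact.exists_isMinOn ⟨w, mem_closedBall.2 le_rfl, hDw⟩
    (continuous_id.dist continuous_const).continuousOn
  refine ⟨z, hsub hz, hDz, fun y hy hDy => (mem_ball.1 hy).not_ge (hmin ⟨?_, hDy⟩)⟩
  exact (mem_ball.1 hy).le.trans hz

/- At a zero `z` of `D` nearest to `c`, continuity gives `‖D (c - ‖z - c‖)‖ ≤ ‖D z‖ = 0`, a zero on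
the segment. -/
theorem ne_zero_of_alternating_inv {D : ℂ → ℂ} {c w : ℂ} {r : ℝ}
    (hD : DifferentiableOn ℂ D (ball c r)) (hD0 : ∀ x : ℝ, 0 ≤ x → x < r → D (c - x) ≠ 0)
    (halt : ∀ n, 0 ≤ (-1) ^ n * iteratedDeriv n D⁻¹ c) (hw : w ∈ ball c r) :
    D w ≠ 0 := by
  intro hDw
  obtain ⟨z, hz, hDz, hne⟩ := exists_nearest_zero hD.continuousOn hw hDw
  have hzc : dist z c ≠ 0 := by
    rw [dist_ne_zero]
    rintro rfl
    exact hD0 0 le_rfl (dist_nonneg.trans_lt hw) (by simpa)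
  have hclosure : closure (ball c (dist z c)) = closedBall c (dist z c) := closure_ball c hzc
  have hsub : closedBall c (dist z c) ⊆ ball c r := closedBall_subset_ball hz
  have hcont : ContinuousOn D (closedBall c (dist z c)) := hD.continuousOn.mono hsub
  have hrefl : ContinuousOn (fun y : ℂ => D (c - ‖y - c‖)) (closedBall c (dist z c)) :=
    hcont.comp (by fun_prop) fun y hy => by simpa [dist_eq] using hy
  have hle : ‖D (c - ‖z - c‖)‖ ≤ ‖D z‖ := by
    refine le_on_closure (s := ball c (dist z c)) (fun y hy =>
      norm_apply_sub_le_norm_of_alternating_inv (hD.mono (ball_subset_closedBall.trans hsub))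
        hne halt hy) ?_ ?_ ?_ <;> rw [hclosure]
    exacts [hrefl.norm, hcont.norm, mem_closedBall.2 le_rfl]
  rw [hDz, norm_zero, norm_le_zero_iff] at hle
  exact hD0 _ (norm_nonneg _) (by rwa [← dist_eq]) hle

end AlternatingTaylorCoefficients

section CompletelyMonotone

theorem iteratedDeriv_eq_ofReal_iteratedDeriv {f : ℂ → ℂ} {g : ℝ → ℝ} {s : Set ℝ} (hs : IsOpen s)
    (hf : ∀ x ∈ s, AnalyticAt ℂ f x) (hfg : ∀ x ∈ s, f x = g x) (n : ℕ) {x : ℝ} (hx : x ∈ s) :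
    iteratedDeriv n f x = ((iteratedDeriv n g x : ℝ) : ℂ) := by
  induction n generalizing x with
  | zero => simpa using hfg x hx
  | succ n ih =>
    have hderiv : HasDerivAt (iteratedDeriv n f) (iteratedDeriv (n + 1) f x) x := by
      rw [iteratedDeriv_succ, hasDerivAt_deriv_iff, iteratedDeriv_eq_iterate]
      exact ((hf x hx).iterated_deriv n).differentiableAt
    have heq : ∀ᶠ y : ℝ in 𝓝 x, ((iteratedDeriv n g y : ℝ) : ℂ) = iteratedDeriv n f y := by
      filter_upwards [hs.mem_nhds hx] with y hy using (ih hy).symm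
    have hderivRe : HasDerivAt (iteratedDeriv n g) (iteratedDeriv (n + 1) f x).re x :=
      hderiv.real_of_complex.congr_of_eventuallyEq (heq.mono fun y hy => by simp [← hy])
    rw [iteratedDeriv_succ (f := g), hderivRe.deriv]
    exact hderiv.comp_ofReal.unique (hderivRe.ofReal_comp.congr_of_eventuallyEq
      (heq.mono fun y hy => hy.symm))

theorem contDiffAt_of_sq_mul_eq_one {H : ℝ → ℝ} {D : ℂ → ℂ} {x : ℝ} {n : WithTop ℕ∞}
    (hD : AnalyticAt ℂ D x) (hH : ∀ᶠ y in 𝓝 x, 0 ≤ H y)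
    (hHD : ∀ᶠ y : ℝ in 𝓝 x, (H y : ℂ) ^ 2 * D y = 1) : ContDiffAt ℝ n H x := by
  have hinv : ∀ᶠ y : ℝ in 𝓝 x, ((D y)⁻¹).re = H y ^ 2 := by
    filter_upwards [hHD] with y hy
    rw [← eq_inv_of_mul_eq_one_left hy, ← ofReal_pow, ofReal_re]
  have hH0 : H x ≠ 0 := by
    intro h
    simpa [h] using hHD.self_of_nhds
  have hsmooth : ContDiffAt ℝ n (fun y : ℝ => ((D y)⁻¹).re) x :=
    (hD.inv (right_ne_zero_of_mul_eq_one hHD.self_of_nhds)).contDiffAt.real_of_complex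
  have hne : ((D x)⁻¹).re ≠ 0 := hinv.self_of_nhds ▸ pow_ne_zero 2 hH0
  refine (hsmooth.sqrt hne).congr_of_eventuallyEq ?_
  filter_upwards [hinv, hH] with y hy hHy
  rw [hy, Real.sqrt_sq hHy]

namespace CompletelyMonotoneOn

theorem mono {f : ℝ → ℝ} {s t : Set ℝ} (hf : CompletelyMonotoneOn f t) (hst : s ⊆ t) :
    CompletelyMonotoneOn f s :=
  fun n x hx => hf n x (hst hx)

theorem nonneg {f : ℝ → ℝ} {s : Set ℝ} (hf : CompletelyMonotoneOn f s) {x : ℝ} (hx : x ∈ s) :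
    0 ≤ f x := by
  simpa using hf 0 x hx

theorem mul {f g : ℝ → ℝ} {s : Set ℝ} (hf : CompletelyMonotoneOn f s)
    (hg : CompletelyMonotoneOn g s) (hfd : ∀ n : ℕ, ∀ x ∈ s, ContDiffAt ℝ n f x)
    (hgd : ∀ n : ℕ, ∀ x ∈ s, ContDiffAt ℝ n g x) : CompletelyMonotoneOn (f * g) s := by
  intro n x hx
  rw [iteratedDeriv_mul (hfd n x hx) (hgd n x hx), Finset.mul_sum]
  refine Finset.sum_nonneg fun i hi => ?_
  have hsplit : (-1 : ℝ) ^ n = (-1) ^ i * (-1) ^ (n - i) := by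
    rw [← pow_add, Nat.add_sub_cancel' (Finset.mem_range_succ_iff.1 hi)]
  calc
    0 ≤ n.choose i * (((-1) ^ i * iteratedDeriv i f x) *
        ((-1) ^ (n - i) * iteratedDeriv (n - i) g x)) :=
      mul_nonneg (Nat.cast_nonneg _) (mul_nonneg (hf i x hx) (hg (n - i) x hx))
    _ = _ := by
      rw [hsplit]
      ring

end CompletelyMonotoneOn

theorem exists_gt_mem_ball_sub {a : ℝ} {w : ℂ} (hw : a < w.re) (b : ℝ) :
    ∃ c : ℝ, b < c ∧ w ∈ ball (c : ℂ) (c - a) := by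
  obtain ⟨c, hbc, hac, hc⟩ := ((eventually_gt_atTop b).and ((eventually_gt_atTop a).and
    (eventually_gt_atTop ((w.re + a) / 2 + w.im ^ 2 / (2 * (w.re - a)))))).exists
  have hpos : 0 < w.re - a := sub_pos.2 hw
  have hsq : (w.re - c) ^ 2 + w.im ^ 2 < (c - a) ^ 2 := by
    rw [← sub_pos] at hc ⊢
    have := mul_pos (mul_pos two_pos hpos) hc
    field_simp at this
    nlinarith
  refine ⟨c, hbc, ?_⟩
  rw [mem_ball, dist_eq]
  refine lt_of_pow_lt_pow_left₀ 2 (sub_nonneg.2 hac.le) ?_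
  rw [← normSq_eq_norm_sq, normSq_apply]
  simpa [sq] using hsq

namespace CompletelyMonotoneOn

variable {a b : ℝ} {D : ℂ → ℂ}

theorem ne_zero_of_mul_eq_one {K : ℝ → ℝ} (hK : CompletelyMonotoneOn K (Ioi b))
    (hD : DifferentiableOn ℂ D {z | a < z.re}) (hD0 : ∀ x : ℝ, a < x → D x ≠ 0)
    (hKD : ∀ x : ℝ, b < x → (K x : ℂ) * D x = 1) {w : ℂ} (hw : a < w.re) : D w ≠ 0 := by
  obtain ⟨c, hc, hwc⟩ := exists_gt_mem_ball_sub hw (max a b)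
  have hball : ball (c : ℂ) (c - a) ⊆ {z | a < z.re} := by
    intro z hz
    have := (abs_re_le_norm (c - z)).trans_lt (mem_ball_iff_norm'.1 hz)
    rw [sub_re, ofReal_re] at this
    exact (sub_lt_sub_iff_left c).1 ((le_abs_self _).trans_lt this)
  have hanalytic : ∀ x ∈ Ioi (max a b), AnalyticAt ℂ D⁻¹ x := fun x hx => by
    have hax : a < x := (max_lt_iff.1 hx).1
    have hnhds : {z : ℂ | a < z.re} ∈ 𝓝 (x : ℂ) := (isOpen_re_gt a).mem_nhds hax
    exact (hD.analyticAt hnhds).inv (hD0 x hax)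
  have hKinv : ∀ x ∈ Ioi (max a b), (D x)⁻¹ = K x := fun x hx =>
    (eq_inv_of_mul_eq_one_left (hKD x (max_lt_iff.1 hx).2)).symm
  refine ne_zero_of_alternating_inv (hD.mono hball) (fun x _ hx => ?_) (fun n => ?_) hwc
  · rw [← ofReal_sub]
    exact hD0 _ (by linarith)
  · rw [iteratedDeriv_eq_ofReal_iteratedDeriv isOpen_Ioi hanalytic hKinv n hc]
    exact_mod_cast hK n c (max_lt_iff.1 hc).2

theorem ne_zero_of_sq_mul_eq_one {H : ℝ → ℝ} (hH : CompletelyMonotoneOn H (Ioi b))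
    (hD : DifferentiableOn ℂ D {z | a < z.re}) (hD0 : ∀ x : ℝ, a < x → D x ≠ 0)
    (hHD : ∀ x : ℝ, b < x → (H x : ℂ) ^ 2 * D x = 1) {w : ℂ} (hw : a < w.re) : D w ≠ 0 := by
  have hH' : CompletelyMonotoneOn H (Ioi (max a b)) :=
    hH.mono (Ioi_subset_Ioi (le_max_right a b))
  have hsmooth : ∀ n : ℕ, ∀ x ∈ Ioi (max a b), ContDiffAt ℝ n H x := fun n x hx => by
    have hnhds : {z : ℂ | a < z.re} ∈ 𝓝 (x : ℂ) :=
      (isOpen_re_gt a).mem_nhds (show a < (x : ℂ).re from (max_lt_iff.1 hx).1)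
    refine contDiffAt_of_sq_mul_eq_one (hD.analyticAt hnhds) ?_ ?_
    all_goals filter_upwards [Ioi_mem_nhds (max_lt_iff.1 hx).2] with y hy
    exacts [hH.nonneg hy, hHD y hy]
  refine (hH'.mul hH' hsmooth hsmooth).ne_zero_of_mul_eq_one hD hD0 (fun x hx => ?_) hw
  rw [Pi.mul_apply, ← sq, ofReal_pow, hHD x (max_lt_iff.1 hx).2]

end CompletelyMonotoneOn

end CompletelyMonotone

section HyperbolicProduct

/-- The function `D` with `D (v + v⁻¹) = g (u * v) * g (u * v⁻¹)`, the complex counterpart of the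
function of `v + 1 / v` in `HCM`. -/
noncomputable def hyperbolicProduct (g : ℂ → ℂ) (u : ℝ) : ℂ → ℂ :=
  (fun v => g (u * v) * g (u * v⁻¹)) ∘ joukowskiInv

variable {g : ℂ → ℂ} {u : ℝ}

theorem hyperbolicProduct_add_inv (g : ℂ → ℂ) (u : ℝ) {v : ℂ} (hv : v ≠ 0) :
    hyperbolicProduct g u (v + v⁻¹) = g (u * v) * g (u * v⁻¹) :=
  apply_joukowskiInv_add_inv (Q := fun v => g (u * v) * g (u * v⁻¹))
    (fun v => by rw [inv_inv, mul_comm]) hv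

theorem differentiableOn_hyperbolicProduct (hg : DifferentiableOn ℂ g slitPlane) (hu : 0 < u) :
    DifferentiableOn ℂ (hyperbolicProduct g u) {w | w + 2 ∈ slitPlane} := by
  refine differentiableOn_comp_joukowskiInv (fun v => by rw [inv_inv, mul_comm]) (.mul ?_ ?_)
  · exact hg.comp (by fun_prop) fun v hv => ofReal_mul_mem_slitPlane hu hv
  · exact hg.comp ((differentiableOn_inv.mono fun v => slitPlane_ne_zero).const_mul _)
      fun v hv => ofReal_mul_mem_slitPlane hu (inv_mem_slitPlane hv)

theorem hyperbolicProduct_ofReal_ne_zero (hpos : ∀ x : ℝ, 0 < x → g x ≠ 0) (hu : 0 < u)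
    (hcircle : ∀ z ∈ slitPlane, ‖z‖ = u → g z ≠ 0) {x : ℝ} (hx : -2 < x) :
    hyperbolicProduct g u x ≠ 0 := by
  have hx2 : (x : ℂ) + 2 ∈ slitPlane := by
    rw [← ofReal_ofNat, ← ofReal_add, ofReal_mem_slitPlane]
    linarith
  have hne : ∀ v ∈ slitPlane, v + v⁻¹ = x → g (u * v) ≠ 0 := by
    intro v hv hvx
    rcases im_eq_zero_or_norm_eq_one_of_add_inv (slitPlane_ne_zero hv) hvx with him | hnorm
    · lift v to ℝ using him
      rw [← ofReal_mul]
      exact hpos _ (mul_pos hu (ofReal_mem_slitPlane.1 hv))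
    · refine hcircle _ (ofReal_mul_mem_slitPlane hu hv) ?_
      rw [norm_mul, hnorm, mul_one, Complex.norm_of_nonneg hu.le]
  have hmem := joukowskiInv_mem_slitPlane hx2
  have hsum := joukowskiInv_add_inv (x : ℂ)
  exact mul_ne_zero (hne _ hmem hsum)
    (hne _ (inv_mem_slitPlane hmem) (by rwa [inv_inv, add_comm]))

theorem sq_mul_hyperbolicProduct_eq_one {f H : ℝ → ℝ}
    (hfg : ∀ x : ℝ, 0 < x → (f x : ℂ) ^ 2 * g x = 1) (hu : 0 < u)
    (hfH : ∀ v : ℝ, 0 < v → f (u * v) * f (u / v) = H (v + 1 / v)) {x : ℝ} (hx : 2 ≤ x) :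
    (H x : ℂ) ^ 2 * hyperbolicProduct g u x = 1 := by
  obtain ⟨v, hv, rfl⟩ := exists_pos_add_inv_eq hx
  have h₁ := hfg (u * v) (mul_pos hu hv)
  have h₂ := hfg (u * v⁻¹) (mul_pos hu (inv_pos.2 hv))
  push_cast at h₁ h₂ ⊢
  rw [hyperbolicProduct_add_inv g u (ofReal_ne_zero.2 hv.ne'), ← one_div v, ← hfH v hv,
    div_eq_mul_inv, ofReal_mul, ← one_mul (1 : ℂ)]
  nth_rw 1 [← h₁]
  rw [← h₂]
  ring

end HyperbolicProduct

section ZeroModuli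

variable {E : Type*} [NormedAddCommGroup E] [NormedSpace ℂ E] [CompleteSpace E] {g : ℂ → E}
  {U : Set ℂ}

theorem countable_setOf_mem_and_eq_zero (hU : IsOpen U) (hUc : IsConnected U)
    (hg : DifferentiableOn ℂ g U) (hne : ∃ z ∈ U, g z ≠ 0) :
    {z ∈ U | g z = 0}.Countable := by
  obtain ⟨z, hz, hgz⟩ := hne
  have hcodiscrete : (g ⁻¹' {0})ᶜ ∈ codiscreteWithin U :=
    (hg.analyticOnNhd hU).preimage_zero_mem_codiscreteWithin hgz hz hUc
  have hdiscrete := isDiscrete_of_codiscreteWithin hcodiscrete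
  rw [inter_comm] at hdiscrete
  exact (HereditarilyLindelofSpace.isLindelof _).countable_of_isDiscrete hdiscrete

theorem exists_mem_forall_norm_eq_imp_ne_zero (hU : IsOpen U) (hUc : IsConnected U)
    (hg : DifferentiableOn ℂ g U) (hne : ∃ z ∈ U, g z ≠ 0) {s : Set ℝ} {x : ℝ} (hs : s ∈ 𝓝 x) :
    ∃ u ∈ s, ∀ z ∈ U, ‖z‖ = u → g z ≠ 0 := by
  have hcountable := (countable_setOf_mem_and_eq_zero hU hUc hg hne).image norm
  obtain ⟨u, hu, hus⟩ := (hcountable.dense_compl ℝ).inter_nhds_nonempty hs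
  exact ⟨u, hus, fun z hz hzu hgz => hu ⟨z, ⟨hz, hgz⟩, hzu⟩⟩

end ZeroModuli

namespace HCM

variable {f : ℝ → ℝ} {g : ℂ → ℂ}

theorem ne_zero_of_forall_norm_eq_ne_zero (hf : HCM f) (hg : DifferentiableOn ℂ g slitPlane)
    (hfg : ∀ x : ℝ, 0 < x → (f x : ℂ) ^ 2 * g x = 1) {u : ℝ} (hu : 0 < u)
    (hcircle : ∀ z ∈ slitPlane, ‖z‖ = u → g z ≠ 0) {v : ℂ} (hv : v ≠ 0)
    (hre : -2 < (v + v⁻¹).re) : g (u * v) ≠ 0 := by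
  obtain ⟨H, hH, hfH⟩ := hf u hu
  have hpos : ∀ x : ℝ, 0 < x → g x ≠ 0 := fun x hx => right_ne_zero_of_mul_eq_one (hfg x hx)
  have hhalfPlane : {w : ℂ | -2 < w.re} ⊆ {w | w + 2 ∈ slitPlane} := fun w hw =>
    Or.inl (by simpa [neg_lt_iff_pos_add] using hw)
  have hD := (hH.mono Ioi_subset_Ici_self).ne_zero_of_sq_mul_eq_one
    ((differentiableOn_hyperbolicProduct hg hu).mono hhalfPlane)
    (fun x hx => hyperbolicProduct_ofReal_ne_zero hpos hu hcircle hx)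
    (fun x hx => sq_mul_hyperbolicProduct_eq_one hfg hu hfH (le_of_lt hx)) hre
  rw [hyperbolicProduct_add_inv g u hv] at hD
  exact left_ne_zero_of_mul hD

theorem ne_zero_of_sq_mul_eq_one (hf : HCM f) (hg : DifferentiableOn ℂ g slitPlane)
    (hfg : ∀ x : ℝ, 0 < x → (f x : ℂ) ^ 2 * g x = 1) {z : ℂ} (hz : z ∈ slitPlane) : g z ≠ 0 := by
  have hz0 : z ≠ 0 := slitPlane_ne_zero hz
  have hnorm : 0 < ‖z‖ := norm_pos_iff.2 hz0
  have hunit : -2 < (z / ‖z‖ + (z / ‖z‖)⁻¹).re := by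
    refine neg_two_lt_re_add_inv ?_ (by simp [hz0])
    rw [div_eq_inv_mul, ← ofReal_inv]
    exact ofReal_mul_mem_slitPlane (inv_pos.2 hnorm) hz
  have hnhds : {u : ℝ | 0 < u ∧ -2 < (z / u + (z / u)⁻¹).re} ∈ 𝓝 ‖z‖ := by
    have hdiv : ContinuousAt (fun u : ℝ => z / u) ‖z‖ :=
      continuousAt_const.div continuous_ofReal.continuousAt (ofReal_ne_zero.2 hnorm.ne')
    have hre := continuous_re.continuousAt.comp (hdiv.add (hdiv.inv₀ (by simp [hz0])))
    exact (lt_mem_nhds hnorm).and (hre.eventually (lt_mem_nhds hunit))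
  have hne : ∃ w ∈ slitPlane, g w ≠ 0 :=
    ⟨(1 : ℝ), by simp, right_ne_zero_of_mul_eq_one (hfg 1 one_pos)⟩
  obtain ⟨u, ⟨hu, hre⟩, hcircle⟩ := exists_mem_forall_norm_eq_imp_ne_zero isOpen_slitPlane
    isConnected_slitPlane hg hne hnhds
  have hu0 : (u : ℂ) ≠ 0 := ofReal_ne_zero.2 hu.ne'
  have := hf.ne_zero_of_forall_norm_eq_ne_zero hg hfg hu hcircle (div_ne_zero hz0 hu0) hre
  rwa [mul_div_cancel₀ _ hu0] at this

end HCM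

section PowerFunction

theorem abs_two_pi_div_lt_pi {t : ℝ} (ht : 2 < |t|) : |2 * Real.pi / t| < Real.pi := by
  rw [abs_div, abs_of_pos Real.two_pi_pos, div_lt_iff₀ (two_pos.trans ht), mul_comm]
  exact mul_lt_mul_of_pos_left ht Real.pi_pos

theorem exp_two_pi_mul_I_div_im_ne_zero {t : ℝ} (ht : 2 < |t|) :
    (exp (2 * Real.pi * I / t)).im ≠ 0 := by
  have hexp : 2 * Real.pi * I / t = (2 * Real.pi / t : ℝ) * I := by
    push_cast
    ring
  obtain ⟨hlo, hhi⟩ := abs_lt.1 (abs_two_pi_div_lt_pi ht)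
  rw [hexp, exp_ofReal_mul_I_im, Ne, Real.sin_eq_zero_iff_of_lt_of_lt hlo hhi]
  exact div_ne_zero Real.two_pi_pos.ne' (abs_pos.1 (two_pos.trans ht))

theorem exp_two_pi_mul_I_div_cpow {t : ℝ} (ht : 2 < |t|) :
    exp (2 * Real.pi * I / t) ^ (t : ℂ) = 1 := by
  have ht0 : (t : ℂ) ≠ 0 := ofReal_ne_zero.2 (abs_pos.1 (two_pos.trans ht))
  have him : (2 * Real.pi * I / t).im = 2 * Real.pi / t := by simp [div_ofReal_im]
  obtain ⟨hlo, hhi⟩ := abs_lt.1 (abs_two_pi_div_lt_pi ht)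
  rw [cpow_def_of_ne_zero (exp_ne_zero _), log_exp (by rwa [him]) (by rw [him]; exact hhi.le),
    div_mul_cancel₀ _ ht0, exp_two_pi_mul_I]

theorem exp_neg_two_pi_mul_I_div_cpow {t : ℝ} (ht : 2 < |t|) :
    exp (-(2 * Real.pi * I / t)) ^ (t : ℂ) = 1 := by
  have harg := mem_slitPlane_iff_arg.1 (Or.inr (exp_two_pi_mul_I_div_im_ne_zero ht))
  rw [exp_neg, inv_cpow _ _ harg.1, exp_two_pi_mul_I_div_cpow ht, inv_one]

theorem exp_neg_im_ne_zero {x : ℂ} (hx : (exp x).im ≠ 0) : (exp (-x)).im ≠ 0 := by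
  rw [exp_neg, inv_im]
  exact div_ne_zero (neg_ne_zero.2 hx) (normSq_pos.2 (exp_ne_zero x)).ne'

theorem exp_ne_exp_neg {x : ℂ} (hx : (exp x).im ≠ 0) : exp x ≠ exp (-x) := by
  intro h
  have hsq : exp x * exp x = 1 := by
    nth_rw 2 [h]
    rw [← exp_add, add_neg_cancel, exp_zero]
  rcases mul_self_eq_one_iff.1 hsq with h | h <;> simp [h] at hx

theorem one_add_mem_slitPlane {w : ℂ} (hw : w ∈ slitPlane) : 1 + w ∈ slitPlane := by
  rw [mem_slitPlane_iff] at hw ⊢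
  rw [add_re, add_im, one_re, one_im, zero_add]
  exact hw.imp_left fun h => by linarith

theorem differentiableOn_one_add_sq_mul_cpow_sub_one (t : ℂ) :
    DifferentiableOn ℂ (fun w => (1 + w) ^ 2 * ((1 + w) ^ t - 1)) slitPlane := by
  intro w hw
  have := one_add_mem_slitPlane hw
  fun_prop (disch := assumption)

theorem sq_one_div_mul_sqrt_rpow_sub_one_mul {t x : ℝ} (ht : 0 < t) (hx : 0 < x) :
    ((1 / ((x + 1) * √((x + 1) ^ t - 1)) : ℝ) : ℂ) ^ 2 *
      ((1 + x) ^ 2 * ((1 + x) ^ (t : ℂ) - 1)) = 1 := by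
  have hpow : 0 < (x + 1) ^ t - 1 := sub_pos.2 (Real.one_lt_rpow (by linarith) ht)
  have hcast : (1 + (x : ℂ)) ^ (t : ℂ) = ((x + 1) ^ t : ℝ) := by
    rw [ofReal_cpow (by linarith), ofReal_add, ofReal_one, add_comm]
  rw [hcast]
  norm_cast
  rw [div_pow, mul_pow, Real.sq_sqrt hpow.le, one_pow, add_comm 1 x]
  exact one_div_mul_cancel (by positivity)

theorem HCM.one_add_cpow_ne_one {t : ℝ} (ht : 0 < t)
    (hf : HCM fun x : ℝ => 1 / ((x + 1) * √((x + 1) ^ t - 1))) {z : ℂ} (hz : z ∈ slitPlane) :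
    (1 + z) ^ (t : ℂ) ≠ 1 :=
  sub_ne_zero.1 <| right_ne_zero_of_mul <|
    hf.ne_zero_of_sq_mul_eq_one (differentiableOn_one_add_sq_mul_cpow_sub_one t)
      (fun _ hx => sq_one_div_mul_sqrt_rpow_sub_one_mul ht hx) hz

end PowerFunction

theorem zeros_and_not_HCM (t : ℝ) (ht : 2 < t) :
    ((1 + (Complex.exp (2 * Real.pi * Complex.I / t) - 1)) ^ (t : ℂ) = 1 ∧
      (Complex.exp (2 * Real.pi * Complex.I / t) - 1).im ≠ 0) ∧
    ((1 + (Complex.exp (-(2 * Real.pi * Complex.I / t)) - 1)) ^ (t : ℂ) = 1 ∧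
      (Complex.exp (-(2 * Real.pi * Complex.I / t)) - 1).im ≠ 0) ∧
    Complex.exp (2 * Real.pi * Complex.I / t) - 1 ≠
      Complex.exp (-(2 * Real.pi * Complex.I / t)) - 1 ∧
    ¬ HCM (fun x : ℝ => 1 / ((x + 1) * Real.sqrt ((x + 1) ^ t - 1))) := by
  have habs : 2 < |t| := ht.trans_le (le_abs_self t)
  have him := exp_two_pi_mul_I_div_im_ne_zero habs
  have hroot : (1 + (exp (2 * Real.pi * I / t) - 1)) ^ (t : ℂ) = 1 := by
    rw [add_sub_cancel, exp_two_pi_mul_I_div_cpow habs]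
  have hroot' : (1 + (exp (-(2 * Real.pi * I / t)) - 1)) ^ (t : ℂ) = 1 := by
    rw [add_sub_cancel, exp_neg_two_pi_mul_I_div_cpow habs]
  have him_sub_one {z : ℂ} (hz : z.im ≠ 0) : (z - 1).im ≠ 0 := by rwa [sub_im, one_im, sub_zero]
  refine ⟨⟨hroot, him_sub_one him⟩, ⟨hroot', him_sub_one (exp_neg_im_ne_zero him)⟩,
    sub_left_injective.ne (exp_ne_exp_neg him), fun hf => ?_⟩
  exact hf.one_add_cpow_ne_one (two_pos.trans ht) (Or.inr (him_sub_one him)) hroot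
end

section
/- For every λ ≥ 0 and α ∈ (0,1), 1/(1 + λ^α) = exp( −α ∫_0^∞ (1 − e^{−λx}) E_α(−x^α) dx/x ), where E_α(y) = Σ_{n≥0} y^n/Γ(1+αn) is the Mittag–Leffler function. -/
/-- The classical Mittag-Leffler function. -/
noncomputable def mittagLeffler (α y : ℝ) : ℝ :=
  ∑' n : ℕ, y ^ n / Real.Gamma (1 + α * n)

/-!
Write `F x = E_α(-x ^ α)` and `k_a x = x ^ (a - 1) / Γ(a)`. Then `F = ∑ (-1) ^ n k_{1 + αn}`, and
`k_a * k_b = k_{a + b}` by the Beta integral, so `F` solves the Volterra equation `F + F * k_α = 1`.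
For `α < 1` the kernel is strictly decreasing, and `F` cannot have a first zero `x`: passing from
`x - h` to `x` would lower the convolution by a multiple of `h`, up to `o(h)`, and hence raise `F`,
although `F x = 0 < F (x - h)`. Thus `0 < F ≤ 1`, the Laplace transform of `F` exists, and the
equation turns into `∫ e ^ (-s x) F x dx = s ^ (α - 1) / (1 + s ^ α)`. Integrating over `s ∈ (0, λ)`
gives `∫ (1 - e ^ (-λ x)) F x dx / x = log (1 + λ ^ α) / α`.
-/

open MeasureTheory Set Filter Topology

lemma rpow_mul_exp_neg_le_Gamma {T p : ℝ} (hT : 0 ≤ T) (hp : 0 ≤ p) :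
    T ^ p * Real.exp (-T) ≤ Real.Gamma (1 + p) := by
  have hint : IntegrableOn (fun x => Real.exp (-x) * x ^ p) (Ioi 0) := by
    simpa only [add_sub_cancel_left] using Real.GammaIntegral_convergent (s := 1 + p) (by linarith)
  calc T ^ p * Real.exp (-T) = ∫ x in Ioi T, T ^ p * Real.exp (-x) := by
        rw [integral_const_mul, integral_exp_neg_Ioi]
    _ ≤ ∫ x in Ioi T, Real.exp (-x) * x ^ p := by
        refine setIntegral_mono_on ((integrableOn_exp_neg_Ioi T).const_mul _)
          (hint.mono_set (Ioi_subset_Ioi hT)) measurableSet_Ioi fun x hx => ?_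
        rw [mul_comm]
        gcongr
        exact hx.le
    _ ≤ ∫ x in Ioi 0, Real.exp (-x) * x ^ p :=
        setIntegral_mono_set hint
          ((ae_restrict_mem measurableSet_Ioi).mono fun x hx =>
            mul_nonneg (Real.exp_pos _).le (Real.rpow_nonneg (le_of_lt hx) _))
          (Ioi_subset_Ioi hT).eventuallyLE
    _ = Real.Gamma (1 + p) := by
        rw [Real.Gamma_eq_integral (by linarith), add_sub_cancel_left]

lemma summable_pow_div_Gamma {α : ℝ} (hα : 0 < α) (y : ℝ) :
    Summable fun n : ℕ => y ^ n / Real.Gamma (1 + α * n) := by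
  -- `T = S ^ α⁻¹` turns the lower bound `T ^ (α n) e ^ (-T)` for `Γ(1 + α n)` into a geometric one.
  set S : ℝ := 2 * (|y| + 1)
  have hS0 : 0 < S := by positivity
  have hGamma (n : ℕ) : S ^ n * Real.exp (-S ^ α⁻¹) ≤ Real.Gamma (1 + α * n) := by
    have h := rpow_mul_exp_neg_le_Gamma (T := S ^ α⁻¹) (p := α * n) (by positivity) (by positivity)
    rwa [← Real.rpow_mul hS0.le, inv_mul_cancel_left₀ hα.ne', Real.rpow_natCast] at h
  refine .of_norm_bounded (g := fun n : ℕ => Real.exp (S ^ α⁻¹) * (1 / 2 : ℝ) ^ n)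
    (summable_geometric_two.mul_left _) fun n => ?_
  have hpos : 0 < Real.Gamma (1 + α * n) := Real.Gamma_pos_of_pos (by positivity)
  rw [norm_div, norm_pow, Real.norm_eq_abs, Real.norm_of_nonneg hpos.le, div_le_iff₀ hpos]
  calc |y| ^ n ≤ (S / 2) ^ n := by gcongr; linarith
    _ = Real.exp (S ^ α⁻¹) * (1 / 2) ^ n * (S ^ n * Real.exp (-S ^ α⁻¹)) := by
        rw [Real.exp_neg, div_pow, one_div, inv_pow]
        field_simp
    _ ≤ _ := by gcongr; exact hGamma n

lemma differentiable_mittagLeffler {α : ℝ} (hα : 0 < α) : Differentiable ℝ (mittagLeffler α) := by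
  set p := FormalMultilinearSeries.ofScalars ℝ fun n : ℕ => (Real.Gamma (1 + α * n))⁻¹
  have hsum : p.sum = mittagLeffler α := by
    ext y
    refine (FormalMultilinearSeries.ofScalars_sum_eq _ y).trans ?_
    simp only [mittagLeffler, smul_eq_mul, div_eq_inv_mul]
  have hradius : p.radius = ⊤ := by
    refine p.radius_eq_top_of_summable_norm fun r => ?_
    refine (summable_pow_div_Gamma hα r).congr fun n => ?_
    have hpos : 0 < Real.Gamma (1 + α * n) := Real.Gamma_pos_of_pos (by positivity)
    rw [FormalMultilinearSeries.ofScalars_norm, Real.norm_of_nonneg (inv_pos.2 hpos).le,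
      div_eq_inv_mul]
  have hball := p.hasFPowerSeriesOnBall (hradius ▸ ENNReal.zero_lt_top)
  rw [hsum, hradius] at hball
  simpa [differentiableOn_univ] using hball.differentiableOn

lemma mittagLeffler_zero (α : ℝ) : mittagLeffler α 0 = 1 := by
  rw [mittagLeffler, tsum_eq_single 0 fun n hn => by rw [zero_pow hn, zero_div]]
  simp

lemma mittagLeffler_one (y : ℝ) : mittagLeffler 1 y = Real.exp y := by
  simp only [mittagLeffler, Real.exp_eq_exp_ℝ, NormedSpace.exp_eq_tsum_div, one_mul,
    add_comm (1 : ℝ), Real.Gamma_nat_eq_factorial]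

lemma continuous_mittagLeffler_neg_rpow {α : ℝ} (hα : 0 < α) :
    Continuous fun x : ℝ => mittagLeffler α (-(x ^ α)) :=
  (differentiable_mittagLeffler hα).continuous.comp (Real.continuous_rpow_const hα.le).neg

lemma differentiableOn_mittagLeffler_neg_rpow {α : ℝ} (hα : 0 < α) :
    DifferentiableOn ℝ (fun x : ℝ => mittagLeffler α (-(x ^ α))) (Ioi 0) := fun x hx =>
  ((differentiable_mittagLeffler hα _).comp x
    (Real.differentiableAt_rpow_const_of_ne α (ne_of_gt hx)).neg).differentiableWithinAt

/-- The Riemann–Liouville kernel of order `a`: convolution with it on `(0, x)` is fractional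
integration of order `a`. Its values at negative `x` are mere conventions of the real power. -/
noncomputable def riemannLiouvilleKernel (a x : ℝ) : ℝ :=
  x ^ (a - 1) / Real.Gamma a

lemma riemannLiouvilleKernel_nonneg {a x : ℝ} (ha : 0 < a) (hx : 0 ≤ x) :
    0 ≤ riemannLiouvilleKernel a x :=
  div_nonneg (Real.rpow_nonneg hx _) (Real.Gamma_pos_of_pos ha).le

lemma riemannLiouvilleKernel_one (x : ℝ) : riemannLiouvilleKernel 1 x = 1 := by
  simp [riemannLiouvilleKernel]

lemma intervalIntegrable_riemannLiouvilleKernel {a : ℝ} (ha : 0 < a) (x y : ℝ) :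
    IntervalIntegrable (riemannLiouvilleKernel a) volume x y :=
  (intervalIntegral.intervalIntegrable_rpow' (by linarith)).div_const _

lemma integral_riemannLiouvilleKernel_mul {a b x : ℝ} (ha : 0 < a) (hb : 0 < b) (hx : 0 < x) :
    ∫ u in (0 : ℝ)..x, riemannLiouvilleKernel a u * riemannLiouvilleKernel b (x - u) =
      riemannLiouvilleKernel (a + b) x := by
  have hbeta : ∫ u in (0 : ℝ)..x, u ^ (a - 1) * (x - u) ^ (b - 1) =
      x ^ (a + b - 1) * (Real.Gamma a * Real.Gamma b / Real.Gamma (a + b)) := by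
    have h := Complex.betaIntegral_scaled a b hx
    rw [Complex.betaIntegral_eq_Gamma_mul_div _ _ (by simpa using ha) (by simpa using hb),
      ← Complex.ofReal_add, Complex.Gamma_ofReal, Complex.Gamma_ofReal, Complex.Gamma_ofReal] at h
    rw [← Complex.ofReal_inj, ← intervalIntegral.integral_ofReal]
    convert h using 1
    · refine intervalIntegral.integral_congr fun u hu => ?_
      rw [uIcc_of_le hx.le] at hu
      rw [Complex.ofReal_mul, Complex.ofReal_cpow hu.1, Complex.ofReal_cpow (sub_nonneg.2 hu.2)]
      push_cast
      rfl
    · rw [Complex.ofReal_mul, Complex.ofReal_cpow hx.le]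
      push_cast
      rfl
  have hGa := (Real.Gamma_pos_of_pos ha).ne'
  have hGb := (Real.Gamma_pos_of_pos hb).ne'
  simp only [riemannLiouvilleKernel, div_mul_div_comm]
  rw [intervalIntegral.integral_div, hbeta]
  field_simp

lemma integral_exp_neg_mul_riemannLiouvilleKernel {a s : ℝ} (ha : 0 < a) (hs : 0 < s) :
    ∫ x in Ioi (0 : ℝ), Real.exp (-(s * x)) * riemannLiouvilleKernel a x = s ^ (-a) := by
  calc
    _ = ∫ x in Ioi (0 : ℝ), x ^ (a - 1) * Real.exp (-(s * x)) / Real.Gamma a := by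
        congr 1 with x
        rw [riemannLiouvilleKernel]
        ring
    _ = (1 / s) ^ a := by
        rw [integral_div, Real.integral_rpow_mul_exp_neg_mul_Ioi ha hs,
          mul_div_cancel_right₀ _ (Real.Gamma_pos_of_pos ha).ne']
    _ = s ^ (-a) := by rw [one_div, Real.inv_rpow hs.le, Real.rpow_neg hs.le]

lemma integrableOn_exp_neg_mul_riemannLiouvilleKernel {a s : ℝ} (ha : 0 < a) (hs : 0 < s) :
    IntegrableOn (fun x => Real.exp (-(s * x)) * riemannLiouvilleKernel a x) (Ioi 0) :=
  .of_integral_ne_zero <| by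
    rw [integral_exp_neg_mul_riemannLiouvilleKernel ha hs]
    exact (Real.rpow_pos_of_pos hs _).ne'

lemma exists_antitoneOn_riemannLiouvilleKernel_add_mul {a x : ℝ} (ha : 0 < a) (ha1 : a < 1)
    (hx : 0 < x) :
    ∃ c > 0, AntitoneOn (fun v => riemannLiouvilleKernel a v + c * v) (Ioc 0 x) := by
  have hGamma := Real.Gamma_pos_of_pos ha
  -- This is minus the slope of the kernel at `x`, where it is least steep.
  refine ⟨(1 - a) * x ^ (a - 2) / Real.Gamma a,
    div_pos (mul_pos (by linarith) (Real.rpow_pos_of_pos hx _)) hGamma, ?_⟩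
  have hderiv {v : ℝ} (hv : 0 < v) : HasDerivAt
      (fun v => riemannLiouvilleKernel a v + (1 - a) * x ^ (a - 2) / Real.Gamma a * v)
      ((1 - a) * (x ^ (a - 2) - v ^ (a - 2)) / Real.Gamma a) v := by
    convert! ((Real.hasDerivAt_rpow_const (p := a - 1) (Or.inl hv.ne')).div_const
      (Real.Gamma a)).add ((hasDerivAt_id v).const_mul _) using 1
    rw [show a - 1 - 1 = a - 2 by ring]
    ring
  refine antitoneOn_of_hasDerivWithinAt_nonpos (convex_Ioc 0 x)
    (fun v hv => (hderiv hv.1).continuousAt.continuousWithinAt)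
    (fun v hv => (hderiv (interior_subset hv).1).hasDerivWithinAt) fun v hv => ?_
  have hv := interior_subset hv
  have hpow : x ^ (a - 2) ≤ v ^ (a - 2) := Real.rpow_le_rpow_of_nonpos hv.1 hv.2 (by linarith)
  exact div_nonpos_of_nonpos_of_nonneg
    (mul_nonpos_of_nonneg_of_nonpos (by linarith) (by linarith)) hGamma.le

lemma intervalIntegrable_mul_comp_sub {f k : ℝ → ℝ} {a b x : ℝ} (hf : ContinuousOn f (uIcc a b))
    (hk : IntervalIntegrable k volume (x - a) (x - b)) :
    IntervalIntegrable (fun u => f u * k (x - u)) volume a b := by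
  have hk' := hk.comp_sub_left x
  rw [sub_sub_cancel, sub_sub_cancel] at hk'
  exact hk'.continuousOn_mul hf

lemma integral_mul_comp_sub_le {f k : ℝ → ℝ} {x h M : ℝ} (hh : 0 ≤ h)
    (hf : ContinuousOn f (Icc (x - h) x)) (hfM : ∀ u ∈ Icc (x - h) x, f u ≤ M)
    (hk : IntervalIntegrable k volume 0 h) (hk_nonneg : ∀ v ∈ Ioo 0 h, 0 ≤ k v) :
    ∫ u in (x - h)..x, f u * k (x - u) ≤ M * ∫ v in 0..h, k v := by
  have hxh : x - h ≤ x := sub_le_self x hh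
  have hk' : IntervalIntegrable k volume (x - (x - h)) (x - x) := by simpa using hk.symm
  calc ∫ u in (x - h)..x, f u * k (x - u) ≤ ∫ u in (x - h)..x, M * k (x - u) :=
        intervalIntegral.integral_mono_on_of_le_Ioo hxh
          (intervalIntegrable_mul_comp_sub (by rwa [uIcc_of_le hxh]) hk')
          (intervalIntegrable_mul_comp_sub continuousOn_const hk')
          fun u hu => mul_le_mul_of_nonneg_right (hfM u ⟨hu.1.le, hu.2.le⟩)
            (hk_nonneg _ ⟨by linarith [hu.2], by linarith [hu.1]⟩)
    _ = M * ∫ v in 0..h, k v := by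
        rw [intervalIntegral.integral_const_mul, intervalIntegral.integral_comp_sub_left k,
          sub_self, sub_sub_cancel]

lemma integral_mul_comp_sub_le_integral_mul_comp_sub_sub {f k : ℝ → ℝ} {x h c : ℝ} (hh : 0 ≤ h)
    (hhx : h ≤ x) (hf : ContinuousOn f (Icc 0 (x - h))) (hf_nonneg : ∀ u ∈ Icc 0 (x - h), 0 ≤ f u)
    (hk : IntervalIntegrable k volume 0 x)
    (hk_anti : AntitoneOn (fun v => k v + c * v) (Ioc 0 x)) :
    ∫ u in 0..(x - h), f u * k (x - u) ≤
      (∫ u in 0..(x - h), f u * k (x - h - u)) - c * h * ∫ u in 0..(x - h), f u := by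
  have hxh : 0 ≤ x - h := sub_nonneg.2 hhx
  rw [← uIcc_of_le hxh] at hf
  have hk' {p q : ℝ} (hp : p ∈ Icc 0 x) (hq : q ∈ Icc 0 x) : IntervalIntegrable k volume p q :=
    hk.mono_set (uIcc_subset_uIcc (Icc_subset_uIcc hp) (Icc_subset_uIcc hq))
  have hx : x ∈ Icc 0 x := ⟨hh.trans hhx, le_rfl⟩
  have hleft := intervalIntegrable_mul_comp_sub (x := x) hf
    (by simpa using hk' hx ⟨hh, hhx⟩)
  have hright := intervalIntegrable_mul_comp_sub (x := x - h) hf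
    (by simpa using hk' ⟨hxh, sub_le_self x hh⟩ ⟨le_rfl, hx.1⟩)
  have hcf : IntervalIntegrable (fun u => c * h * f u) volume 0 (x - h) :=
    hf.intervalIntegrable.const_mul _
  rw [← intervalIntegral.integral_const_mul, ← intervalIntegral.integral_sub hright hcf]
  refine intervalIntegral.integral_mono_on_of_le_Ioo hxh hleft (hright.sub hcf)
    fun u hu => ?_
  have hdrop : k (x - u) + c * (x - u) ≤ k (x - h - u) + c * (x - h - u) :=
    hk_anti ⟨by linarith [hu.2], by linarith [hu.1]⟩ ⟨by linarith [hu.2], by linarith [hu.1]⟩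
      (by linarith)
  calc f u * k (x - u) ≤ f u * (k (x - h - u) - c * h) :=
        mul_le_mul_of_nonneg_left (by linarith) (hf_nonneg u ⟨hu.1.le, hu.2.le⟩)
    _ = f u * k (x - h - u) - c * h * f u := by ring

lemma integral_mul_comp_sub_sub_le {f k : ℝ → ℝ} {x h c M : ℝ} (hh : 0 ≤ h) (hhx : h ≤ x)
    (hf : ContinuousOn f (Icc 0 x)) (hf_nonneg : ∀ u ∈ Icc 0 x, 0 ≤ f u)
    (hfM : ∀ u ∈ Icc (x - h) x, f u ≤ M) (hk : IntervalIntegrable k volume 0 x)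
    (hk_nonneg : ∀ v ∈ Ioc 0 x, 0 ≤ k v)
    (hk_anti : AntitoneOn (fun v => k v + c * v) (Ioc 0 x)) :
    (∫ u in 0..x, f u * k (x - u)) - ∫ u in 0..(x - h), f u * k (x - h - u) ≤
      M * (∫ v in 0..h, k v) - c * h * ∫ u in 0..(x - h), f u := by
  have hint : IntervalIntegrable (fun u => f u * k (x - u)) volume 0 x :=
    intervalIntegrable_mul_comp_sub (by rwa [uIcc_of_le (hh.trans hhx)]) (by simpa using hk.symm)
  have hmem : x - h ∈ uIcc 0 x := Icc_subset_uIcc ⟨sub_nonneg.2 hhx, sub_le_self x hh⟩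
  have hnear := integral_mul_comp_sub_le hh (hf.mono (Icc_subset_Icc_left (sub_nonneg.2 hhx))) hfM
    (hk.mono_set (uIcc_subset_uIcc_left (Icc_subset_uIcc ⟨hh, hhx⟩)))
    fun v hv => hk_nonneg v ⟨hv.1, hv.2.le.trans hhx⟩
  have hfar := integral_mul_comp_sub_le_integral_mul_comp_sub_sub hh hhx
    (hf.mono (Icc_subset_Icc_right (sub_le_self x hh)))
    (fun u hu => hf_nonneg u ⟨hu.1, hu.2.trans (sub_le_self x hh)⟩) hk hk_anti
  rw [← intervalIntegral.integral_add_adjacent_intervals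
    (hint.mono_set (uIcc_subset_uIcc_left hmem)) (hint.mono_set (uIcc_subset_uIcc_right hmem))]
  linarith

lemma tendsto_integral_nhdsGT_zero {f : ℝ → ℝ} {x : ℝ} (hx : 0 < x)
    (hf : IntervalIntegrable f volume 0 x) :
    Tendsto (fun h => ∫ u in 0..h, f u) (𝓝[>] 0) (𝓝 0) := by
  have hcont := intervalIntegral.continuousOn_primitive_interval' hf left_mem_uIcc
  rw [uIcc_of_le hx.le] at hcont
  simpa using (hcont 0 ⟨le_rfl, hx.le⟩).mono_left (nhdsWithin_le_of_mem (Icc_mem_nhdsGT hx))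

lemma tendsto_integral_sub_nhdsGT_zero {f : ℝ → ℝ} {x : ℝ} (hx : 0 < x)
    (hf : IntervalIntegrable f volume 0 x) :
    Tendsto (fun h => ∫ u in 0..(x - h), f u) (𝓝[>] 0) (𝓝 (∫ u in 0..x, f u)) := by
  have hcont := intervalIntegral.continuousOn_primitive_interval' hf left_mem_uIcc
  rw [uIcc_of_le hx.le] at hcont
  have hsub : ContinuousOn (fun h => ∫ u in 0..(x - h), f u) (Icc 0 x) :=
    hcont.comp (continuousOn_const.sub continuousOn_id) fun h hh =>
      ⟨sub_nonneg.2 hh.2, sub_le_self x hh.1⟩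
  simpa using (hsub 0 ⟨le_rfl, hx.le⟩).mono_left (nhdsWithin_le_of_mem (Icc_mem_nhdsGT hx))

lemma ne_zero_of_add_integral_mul_comp_sub_eq {f k : ℝ → ℝ} {x b c : ℝ} (hx : 0 < x) (hc : 0 < c)
    (hf : ContinuousOn f (Icc 0 x)) (hf_pos : ∀ u ∈ Ico 0 x, 0 < f u)
    (hf_diff : DifferentiableAt ℝ f x) (hk : IntervalIntegrable k volume 0 x)
    (hk_nonneg : ∀ v ∈ Ioc 0 x, 0 ≤ k v)
    (hk_anti : AntitoneOn (fun v => k v + c * v) (Ioc 0 x))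
    (hfk : ∀ y ∈ Ioc 0 x, f y + ∫ u in 0..y, f u * k (y - u) = b) : f x ≠ 0 := by
  intro hfx
  obtain ⟨C, hC⟩ := hf_diff.isBigO_sub.bound
  obtain ⟨δ, hδ, hball⟩ := Metric.eventually_nhds_iff.1 hC
  have hfu : IntervalIntegrable f volume 0 x := hf.intervalIntegrable_of_Icc hx.le
  have hf_nonneg : ∀ u ∈ Icc 0 x, 0 ≤ f u := fun u hu =>
    hu.2.eq_or_lt.elim (fun h => (h ▸ hfx).ge) fun h => (hf_pos u ⟨hu.1, h⟩).le
  -- The equations at `x` and `x - h`, subtracted and divided by `h`.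
  have hquot : ∀ᶠ h in 𝓝[>] (0 : ℝ),
      0 ≤ max C 0 * (∫ v in 0..h, k v) - c * ∫ u in 0..(x - h), f u := by
    filter_upwards [Ioo_mem_nhdsGT (lt_min hx hδ)] with h ⟨hh, hlt⟩
    obtain ⟨hhx, hhδ⟩ := lt_min_iff.1 hlt
    have hfM : ∀ u ∈ Icc (x - h) x, f u ≤ max C 0 * h := fun u hu => by
      have hux : |u - x| ≤ h := abs_sub_le_iff.2 ⟨by linarith [hu.2], by linarith [hu.1]⟩
      have hfu := hball (y := u) (hux.trans_lt hhδ)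
      rw [hfx, sub_zero] at hfu
      calc f u ≤ C * |u - x| := (le_abs_self _).trans hfu
        _ ≤ max C 0 * h := by gcongr; exact le_max_left C 0
    have hle := integral_mul_comp_sub_sub_le hh.le hhx.le hf hf_nonneg hfM hk hk_nonneg hk_anti
    have hdiff := (hfk x ⟨hx, le_rfl⟩).trans
      (hfk (x - h) ⟨sub_pos.2 hhx, sub_le_self x hh.le⟩).symm
    have hfxh := hf_pos (x - h) ⟨(sub_pos.2 hhx).le, sub_lt_self x hh⟩
    refine nonneg_of_mul_nonneg_right ?_ hh
    linarith
  have hlim := ((tendsto_integral_nhdsGT_zero hx hk).const_mul (max C 0)).sub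
    ((tendsto_integral_sub_nhdsGT_zero hx hfu).const_mul c)
  have hint_pos : 0 < ∫ u in 0..x, f u :=
    intervalIntegral.intervalIntegral_pos_of_pos_on hfu
      (fun u hu => hf_pos u ⟨hu.1.le, hu.2⟩) hx
  have hlim_nonneg := ge_of_tendsto hlim hquot
  linarith [mul_pos hc hint_pos]

lemma pos_of_add_integral_mul_comp_sub_eq {f k : ℝ → ℝ} {b x : ℝ} (hf : ContinuousOn f (Ici 0))
    (hf_diff : DifferentiableOn ℝ f (Ioi 0)) (hf_zero : 0 < f 0)
    (hk : ∀ y > 0, IntervalIntegrable k volume 0 y) (hk_nonneg : ∀ v > 0, 0 ≤ k v)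
    (hk_anti : ∀ y > 0, ∃ c > 0, AntitoneOn (fun v => k v + c * v) (Ioc 0 y))
    (hfk : ∀ y > 0, f y + ∫ u in 0..y, f u * k (y - u) = b) (hx : 0 ≤ x) : 0 < f x := by
  by_contra! hfx
  have hclosed : IsClosed (Icc 0 x ∩ f ⁻¹' Iic 0) :=
    (hf.mono Icc_subset_Ici_self).preimage_isClosed_of_isClosed isClosed_Icc isClosed_Iic
  obtain ⟨y, ⟨⟨hy0, hyx⟩, hfy⟩, hmin⟩ :=
    (isCompact_Icc.of_isClosed_subset hclosed inter_subset_left).exists_isLeast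
      ⟨x, ⟨hx, le_rfl⟩, hfx⟩
  have hy : 0 < y := hy0.lt_of_ne' fun h => by
    subst h
    exact hf_zero.not_ge hfy
  have hpos : ∀ u ∈ Ico 0 y, 0 < f u := fun u hu => by
    by_contra! h
    exact hu.2.not_ge (hmin ⟨⟨hu.1, hu.2.le.trans hyx⟩, h⟩)
  have hcont : ContinuousOn f (Icc 0 y) := hf.mono Icc_subset_Ici_self
  have hdiff : DifferentiableAt ℝ f y := hf_diff.differentiableAt (Ioi_mem_nhds hy)
  have hnonneg : 0 ≤ f y := by
    refine ge_of_tendsto (hdiff.continuousAt.tendsto.mono_left (nhdsWithin_le_nhds (s := Iio y))) ?_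
    filter_upwards [Ioo_mem_nhdsLT hy] with u hu using (hpos u ⟨hu.1.le, hu.2⟩).le
  obtain ⟨c, hc, hanti⟩ := hk_anti y hy
  exact ne_zero_of_add_integral_mul_comp_sub_eq hy hc hcont hpos
    hdiff (hk y hy) (fun v hv => hk_nonneg v hv.1) hanti
    (fun z hz => hfk z hz.1) (le_antisymm hfy hnonneg)

lemma hasSum_mittagLeffler_neg_rpow {α x : ℝ} (hα : 0 < α) (hx : 0 ≤ x) :
    HasSum (fun n : ℕ => (-1) ^ n * riemannLiouvilleKernel (1 + α * n) x)
      (mittagLeffler α (-(x ^ α))) := by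
  refine (summable_pow_div_Gamma hα _).hasSum.congr_fun fun n => ?_
  rw [riemannLiouvilleKernel, add_sub_cancel_left, Real.rpow_mul hx, Real.rpow_natCast, neg_pow]
  ring

lemma summable_riemannLiouvilleKernel {α x : ℝ} (hα : 0 < α) (hx : 0 ≤ x) :
    Summable fun n : ℕ => riemannLiouvilleKernel (1 + α * n) x := by
  refine (summable_pow_div_Gamma hα (x ^ α)).congr fun n => ?_
  rw [riemannLiouvilleKernel, add_sub_cancel_left, Real.rpow_mul hx, Real.rpow_natCast]

lemma hasSum_integral_mittagLeffler_mul_riemannLiouvilleKernel {α x : ℝ} (hα : 0 < α)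
    (hx : 0 < x) :
    HasSum (fun n : ℕ => (-1) ^ n * riemannLiouvilleKernel (1 + α * (n + 1 : ℕ)) x)
      (∫ u in 0..x, mittagLeffler α (-(u ^ α)) * riemannLiouvilleKernel α (x - u)) := by
  have hpos (n : ℕ) : 0 < 1 + α * n := by positivity
  set T : ℕ → ℝ → ℝ := fun n u =>
    riemannLiouvilleKernel (1 + α * n) u * riemannLiouvilleKernel α (x - u)
  have hT_integral (n : ℕ) :
      ∫ u in Ioc 0 x, T n u = riemannLiouvilleKernel (1 + α * (n + 1 : ℕ)) x := by
    rw [← intervalIntegral.integral_of_le hx.le,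
      integral_riemannLiouvilleKernel_mul (hpos n) hα hx]
    push_cast
    ring_nf
  have hT_nonneg (n : ℕ) : ∀ u ∈ Ioc 0 x, 0 ≤ T n u := fun u hu =>
    mul_nonneg (riemannLiouvilleKernel_nonneg (hpos n) hu.1.le)
      (riemannLiouvilleKernel_nonneg hα (sub_nonneg.2 hu.2))
  have hT_int (n : ℕ) : IntegrableOn (T n) (Ioc 0 x) := by
    refine .of_integral_ne_zero ?_
    rw [hT_integral]
    exact (div_pos (Real.rpow_pos_of_pos hx _) (Real.Gamma_pos_of_pos (hpos (n + 1)))).ne'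
  have hT_norm (n : ℕ) : ∫ u in Ioc 0 x, ‖(-1) ^ n * T n u‖ =
      riemannLiouvilleKernel (1 + α * (n + 1 : ℕ)) x := by
    rw [← hT_integral]
    refine setIntegral_congr_fun measurableSet_Ioc fun u hu => ?_
    simp [abs_of_nonneg (hT_nonneg n u hu)]
  have hsum := hasSum_integral_of_summable_integral_norm (fun n => (hT_int n).const_mul ((-1) ^ n))
    (by simpa only [hT_norm] using
      (summable_nat_add_iff 1).2 (summable_riemannLiouvilleKernel hα hx.le))
  have hT_tsum : EqOn (fun u => ∑' n : ℕ, (-1) ^ n * T n u)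
      (fun u => mittagLeffler α (-(u ^ α)) * riemannLiouvilleKernel α (x - u)) (Ioc 0 x) :=
    fun u hu => by
      simp only [T, ← mul_assoc, tsum_mul_right,
        (hasSum_mittagLeffler_neg_rpow hα hu.1.le).tsum_eq]
  rwa [setIntegral_congr_fun measurableSet_Ioc hT_tsum, ← intervalIntegral.integral_of_le hx.le,
    funext fun n => (integral_const_mul _ _).trans (congrArg _ (hT_integral n))] at hsum

lemma mittagLeffler_neg_rpow_add_integral {α x : ℝ} (hα : 0 < α) (hx : 0 < x) :
    mittagLeffler α (-(x ^ α)) +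
      ∫ u in 0..x, mittagLeffler α (-(u ^ α)) * riemannLiouvilleKernel α (x - u) = 1 := by
  have hseries := (hasSum_nat_add_iff' 1).2 (hasSum_mittagLeffler_neg_rpow hα hx.le)
  have hint := (hasSum_integral_mittagLeffler_mul_riemannLiouvilleKernel hα hx).neg
  have heq := hseries.unique (hint.congr_fun fun n => by rw [pow_succ]; ring)
  rw [Finset.sum_range_one, pow_zero, one_mul, Nat.cast_zero, mul_zero, add_zero,
    riemannLiouvilleKernel_one] at heq
  linarith

lemma mittagLeffler_neg_rpow_pos {α x : ℝ} (hα : α ∈ Ioc (0 : ℝ) 1) (hx : 0 ≤ x) :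
    0 < mittagLeffler α (-(x ^ α)) := by
  rcases hα.2.eq_or_lt with rfl | hα1
  · rw [mittagLeffler_one]
    exact Real.exp_pos _
  · refine pos_of_add_integral_mul_comp_sub_eq (f := fun x => mittagLeffler α (-(x ^ α)))
      (b := 1) (continuous_mittagLeffler_neg_rpow hα.1).continuousOn
      (differentiableOn_mittagLeffler_neg_rpow hα.1) ?_
      (fun y _ => intervalIntegrable_riemannLiouvilleKernel hα.1 0 y)
      (fun v hv => riemannLiouvilleKernel_nonneg hα.1 hv.le)
      (fun y hy => exists_antitoneOn_riemannLiouvilleKernel_add_mul hα.1 hα1 hy)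
      (fun y hy => mittagLeffler_neg_rpow_add_integral hα.1 hy) hx
    rw [Real.zero_rpow hα.1.ne', neg_zero, mittagLeffler_zero]
    exact one_pos

lemma mittagLeffler_neg_rpow_le_one {α x : ℝ} (hα : α ∈ Ioc (0 : ℝ) 1) (hx : 0 < x) :
    mittagLeffler α (-(x ^ α)) ≤ 1 := by
  refine (mittagLeffler_neg_rpow_add_integral hα.1 hx).le.trans' ?_
  exact le_add_of_nonneg_right <| intervalIntegral.integral_nonneg hx.le fun u hu =>
    mul_nonneg (mittagLeffler_neg_rpow_pos hα hu.1).le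
      (riemannLiouvilleKernel_nonneg hα.1 (sub_nonneg.2 hu.2))

lemma integral_exp_neg_mul_integral_mul_comp_sub {f k : ℝ → ℝ} {s : ℝ}
    (hf : IntegrableOn (fun x => Real.exp (-(s * x)) * f x) (Ioi 0))
    (hk : IntegrableOn (fun x => Real.exp (-(s * x)) * k x) (Ioi 0)) :
    ∫ x in Ioi (0 : ℝ), Real.exp (-(s * x)) * ∫ u in 0..x, f u * k (x - u) =
      (∫ x in Ioi (0 : ℝ), Real.exp (-(s * x)) * f x) *
        ∫ x in Ioi (0 : ℝ), Real.exp (-(s * x)) * k x := by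
  refine Eq.trans ?_ (integral_posConvolution hf hk (ContinuousLinearMap.mul ℝ ℝ))
  congr 1 with x
  rw [← intervalIntegral.integral_const_mul]
  congr 1 with u
  rw [ContinuousLinearMap.mul_apply', show -(s * x) = -(s * u) + -(s * (x - u)) by ring,
    Real.exp_add]
  ring

lemma integrableOn_exp_neg_mul_mittagLeffler {α s : ℝ} (hα : α ∈ Ioc (0 : ℝ) 1) (hs : 0 < s) :
    IntegrableOn (fun x => Real.exp (-(s * x)) * mittagLeffler α (-(x ^ α))) (Ioi 0) := by
  simp only [← neg_mul]
  refine (exp_neg_integrableOn_Ioi 0 hs).mul_bdd (c := 1)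
    (continuous_mittagLeffler_neg_rpow hα.1).aestronglyMeasurable ?_
  filter_upwards [ae_restrict_mem measurableSet_Ioi] with x hx
  rw [Real.norm_of_nonneg (mittagLeffler_neg_rpow_pos hα (le_of_lt hx)).le]
  exact mittagLeffler_neg_rpow_le_one hα hx

lemma integral_exp_neg_mul_mittagLeffler {α s : ℝ} (hα : α ∈ Ioc (0 : ℝ) 1) (hs : 0 < s) :
    ∫ x in Ioi (0 : ℝ), Real.exp (-(s * x)) * mittagLeffler α (-(x ^ α)) =
      s ^ (α - 1) / (1 + s ^ α) := by
  have hint := integrableOn_exp_neg_mul_mittagLeffler hα hs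
  set L := ∫ x in Ioi (0 : ℝ), Real.exp (-(s * x)) * mittagLeffler α (-(x ^ α))
  have hconv : L * s ^ (-α) = s⁻¹ - L := by
    calc L * s ^ (-α) = ∫ x in Ioi (0 : ℝ), Real.exp (-(s * x)) *
          ∫ u in 0..x, mittagLeffler α (-(u ^ α)) * riemannLiouvilleKernel α (x - u) := by
          rw [integral_exp_neg_mul_integral_mul_comp_sub hint
            (integrableOn_exp_neg_mul_riemannLiouvilleKernel hα.1 hs),
            integral_exp_neg_mul_riemannLiouvilleKernel hα.1 hs]
      _ = ∫ x in Ioi (0 : ℝ), (Real.exp (-(s * x)) * riemannLiouvilleKernel 1 x -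
          Real.exp (-(s * x)) * mittagLeffler α (-(x ^ α))) :=
          setIntegral_congr_fun measurableSet_Ioi fun x hx => by
            rw [← mul_sub, riemannLiouvilleKernel_one,
              ← mittagLeffler_neg_rpow_add_integral hα.1 hx, add_sub_cancel_left]
      _ = s⁻¹ - L := by
          rw [integral_sub (integrableOn_exp_neg_mul_riemannLiouvilleKernel one_pos hs) hint,
            integral_exp_neg_mul_riemannLiouvilleKernel one_pos hs, Real.rpow_neg_one]
  have hsα : 0 < s ^ α := Real.rpow_pos_of_pos hs α
  rw [Real.rpow_neg hs.le] at hconv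
  rw [Real.rpow_sub_one hs.ne']
  field_simp at hconv ⊢
  linarith

lemma integral_one_sub_exp_mul_div {f : ℝ → ℝ} {lam : ℝ} (hlam : 0 ≤ lam)
    (hf : AEStronglyMeasurable f (volume.restrict (Ioi 0))) (hf_nonneg : ∀ x ∈ Ioi 0, 0 ≤ f x)
    (hf_int : ∀ s ∈ Ioc 0 lam, IntegrableOn (fun x => Real.exp (-(s * x)) * f x) (Ioi 0))
    (hL : IntervalIntegrable (fun s => ∫ x in Ioi (0 : ℝ), Real.exp (-(s * x)) * f x)
      volume 0 lam) :
    ∫ x in Ioi (0 : ℝ), (1 - Real.exp (-(lam * x))) * f x / x =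
      ∫ s in 0..lam, ∫ x in Ioi (0 : ℝ), Real.exp (-(s * x)) * f x := by
  have hinner {x : ℝ} (hx : 0 < x) :
      ∫ s in 0..lam, Real.exp (-(s * x)) = (1 - Real.exp (-(lam * x))) / x := by
    simp only [← mul_neg]
    rw [intervalIntegral.integral_comp_mul_right Real.exp (neg_ne_zero.2 hx.ne'), integral_exp,
      zero_mul, Real.exp_zero, smul_eq_mul]
    field_simp
    ring
  have hprod : Integrable (fun p : ℝ × ℝ => Real.exp (-(p.1 * p.2)) * f p.2)
      ((volume.restrict (Ioc 0 lam)).prod (volume.restrict (Ioi 0))) := by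
    refine (integrable_prod_iff ?_).2 ⟨?_, ?_⟩
    · have hexp : Continuous fun p : ℝ × ℝ => Real.exp (-(p.1 * p.2)) := by fun_prop
      exact hexp.aestronglyMeasurable.mul hf.comp_snd
    · filter_upwards [ae_restrict_mem measurableSet_Ioc] with s hs using hf_int s hs
    · refine ((intervalIntegrable_iff_integrableOn_Ioc_of_le hlam).1 hL).congr ?_
      refine .of_forall fun s => setIntegral_congr_fun measurableSet_Ioi fun x hx => ?_
      exact (Real.norm_of_nonneg (mul_nonneg (Real.exp_pos _).le (hf_nonneg x hx))).symm
  calc _ = ∫ x in Ioi (0 : ℝ), ∫ s in Ioc 0 lam, Real.exp (-(s * x)) * f x :=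
        setIntegral_congr_fun measurableSet_Ioi fun x hx => by
          rw [integral_mul_const, ← intervalIntegral.integral_of_le hlam, hinner hx,
            div_mul_eq_mul_div]
    _ = ∫ s in Ioc 0 lam, ∫ x in Ioi (0 : ℝ), Real.exp (-(s * x)) * f x :=
        (integral_integral_swap hprod).symm
    _ = _ := (intervalIntegral.integral_of_le hlam).symm

lemma intervalIntegrable_rpow_div_one_add_rpow {α b : ℝ} (hα : 0 < α) (hb : 0 ≤ b) :
    IntervalIntegrable (fun s : ℝ => s ^ (α - 1) / (1 + s ^ α)) volume 0 b := by
  refine (intervalIntegral.intervalIntegrable_rpow' (by linarith)).mul_continuousOn ?_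
  refine ContinuousOn.inv₀
    (continuous_const.add (Real.continuous_rpow_const hα.le)).continuousOn fun s hs => ?_
  rw [uIcc_of_le hb] at hs
  exact (add_pos_of_pos_of_nonneg one_pos (Real.rpow_nonneg hs.1 α)).ne'

lemma integral_rpow_div_one_add_rpow {α b : ℝ} (hα : 0 < α) (hb : 0 ≤ b) :
    ∫ s in 0..b, s ^ (α - 1) / (1 + s ^ α) = Real.log (1 + b ^ α) / α := by
  have hpos {s : ℝ} (hs : 0 ≤ s) : 0 < 1 + s ^ α :=
    add_pos_of_pos_of_nonneg one_pos (Real.rpow_nonneg hs α)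
  have hcont : ContinuousOn (fun s : ℝ => Real.log (1 + s ^ α) / α) (Icc 0 b) :=
    ((continuous_const.add (Real.continuous_rpow_const hα.le)).continuousOn.log
      fun s hs => (hpos hs.1).ne').div_const α
  have hderiv : ∀ s ∈ Ioo 0 b, HasDerivAt (fun s : ℝ => Real.log (1 + s ^ α) / α)
      (s ^ (α - 1) / (1 + s ^ α)) s := fun s hs => by
    convert! (((Real.hasDerivAt_rpow_const (p := α) (Or.inl hs.1.ne')).const_add 1).log
      (hpos hs.1.le).ne').div_const α using 1
    field_simp
  rw [intervalIntegral.integral_eq_sub_of_hasDerivAt_of_le hb hcont hderiv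
    (intervalIntegrable_rpow_div_one_add_rpow hα hb), Real.zero_rpow hα.ne', add_zero,
    Real.log_one, zero_div, sub_zero]

theorem mittagLeffler_GGC_representation_general {α : ℝ} (hα : α ∈ Ioc (0 : ℝ) 1) {lam : ℝ}
    (hlam : 0 ≤ lam) :
    1 / (1 + lam ^ α) =
      Real.exp (-(α * ∫ x in Ioi (0 : ℝ),
        (1 - Real.exp (-(lam * x))) * mittagLeffler α (-(x ^ α)) / x)) := by
  have hLaplace : EqOn (fun s => s ^ (α - 1) / (1 + s ^ α))
      (fun s => ∫ x in Ioi (0 : ℝ), Real.exp (-(s * x)) * mittagLeffler α (-(x ^ α)))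
      (uIoc 0 lam) := fun s hs =>
    (integral_exp_neg_mul_mittagLeffler hα (uIoc_of_le hlam ▸ hs).1).symm
  have hlog : ∫ x in Ioi (0 : ℝ), (1 - Real.exp (-(lam * x))) * mittagLeffler α (-(x ^ α)) / x =
      Real.log (1 + lam ^ α) / α := by
    rw [integral_one_sub_exp_mul_div hlam
      (continuous_mittagLeffler_neg_rpow hα.1).aestronglyMeasurable
      (fun x hx => (mittagLeffler_neg_rpow_pos hα (le_of_lt hx)).le)
      (fun s hs => integrableOn_exp_neg_mul_mittagLeffler hα hs.1)
      ((intervalIntegrable_rpow_div_one_add_rpow hα.1 hlam).congr hLaplace),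
      ← integral_rpow_div_one_add_rpow hα.1 hlam]
    exact (intervalIntegral.integral_congr_ae (.of_forall hLaplace)).symm
  have hpos : 0 < 1 + lam ^ α := add_pos_of_pos_of_nonneg one_pos (Real.rpow_nonneg hlam α)
  rw [hlog, mul_div_cancel₀ _ hα.1.ne', Real.exp_neg, Real.exp_log hpos, one_div]

theorem mittagLeffler_GGC_representation (α : ℝ) (hα : α ∈ Set.Ioo (0:ℝ) 1)
    (lam : ℝ) (hlam : 0 ≤ lam) :
    1 / (1 + lam ^ α) =
      Real.exp (-(α * ∫ x in Set.Ioi (0:ℝ),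
        (1 - Real.exp (-(lam * x))) * mittagLeffler α (-(x ^ α)) / x)) :=
  mittagLeffler_GGC_representation_general (Ioo_subset_Ioc_self hα) hlam
end
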